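/- Let A ∈ 𝓡 be a fixed set, X a random vector in [0,∞)^d with distribution F, and Θ a nonnegative random variable not degenerate at 0. Suppose the pair (X, Θ) satisfies Assumption CD_A and Assumption B_A. Then for each class 𝓑 ∈ {𝓒, 𝓓, 𝓓∩𝓛, 𝓢, 𝓛, 𝓟𝓓, 𝓓∩𝓟𝓓, 𝓐, 𝓣, 𝓓∩𝓐}: if F ∈ 𝓑_A, then the distribution G of the scale mixture ΘX = (ΘX_1, …, ΘX_d) also belongs to 𝓑_A. -/

import Mathlib

open MeasureTheory ProbabilityTheory Filter Topology
open scoped Pointwise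

namespace Paper

variable {d : ℕ} {Ω : Type*} [MeasurableSpace Ω]

/-- The family `𝓡` of open, increasing sets with convex complement, bounded away from `0`. -/
structure IsRSet (d : ℕ) (A : Set (Fin d → ℝ)) : Prop where
  isOpen : IsOpen A
  increasing : ∀ u ∈ A, ∀ v : Fin d → ℝ, (∀ i, 0 ≤ v i) → u + v ∈ A
  convex_compl : Convex ℝ Aᶜ
  zero_notMem_closure : (0 : Fin d → ℝ) ∉ closure A

/-- `Y_A(z) = sup { u > 0 : z ∈ u A }`. -/
noncomputable def suprA (A : Set (Fin d → ℝ)) (z : Fin d → ℝ) : ℝ :=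
  sSup {u : ℝ | 0 < u ∧ z ∈ u • A}

/-- `F_A`, the distribution of `Y_A = suprA A ∘ X` under `P`. -/
noncomputable def FA (P : Measure Ω) (A : Set (Fin d → ℝ)) (X : Ω → Fin d → ℝ) :
    Measure ℝ :=
  P.map (fun ω => suprA A (X ω))

/-- `F (x A) = P[X ∈ x A]` as a real number. -/
noncomputable def vTail (P : Measure Ω) (A : Set (Fin d → ℝ)) (X : Ω → Fin d → ℝ)
    (x : ℝ) : ℝ :=
  (P {ω | X ω ∈ x • A}).toReal

/-- Tail `ν(x, ∞)` of a measure on `ℝ`, as a real number. -/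
noncomputable def mTail (ν : Measure ℝ) (x : ℝ) : ℝ := (ν (Set.Ioi x)).toReal

/-- Convolution of two measures on `ℝ`. -/
noncomputable def mConv (μ ν : Measure ℝ) : Measure ℝ :=
  (μ.prod ν).map (fun p => p.1 + p.2)

/-- `n`-fold convolution power. -/
noncomputable def mConvN (ν : Measure ℝ) : ℕ → Measure ℝ
  | 0 => Measure.dirac 0
  | n + 1 => mConv (mConvN ν n) ν

/-- Long-tailed class `𝓛`. -/
def MemL (ν : Measure ℝ) : Prop :=
  ∀ a : ℝ, 0 < a → Tendsto (fun x => mTail ν (x - a) / mTail ν x) atTop (𝓝 1)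

/-- Subexponential class `𝓢`. -/
def MemS (ν : Measure ℝ) : Prop :=
  Tendsto (fun x => mTail (mConv ν ν) x / mTail ν x) atTop (𝓝 2)

/-- Dominatedly varying class `𝓓`. -/
def MemD (ν : Measure ℝ) : Prop :=
  ∀ y : ℝ, 0 < y → y < 1 → ∃ C : ℝ, ∀ᶠ x in atTop, mTail ν (y * x) / mTail ν x ≤ C

/-- Positively decreasing class `𝓟𝓓`. -/
def MemPD (ν : Measure ℝ) : Prop :=
  ∀ b : ℝ, 1 < b → ∃ c : ℝ, c < 1 ∧ ∀ᶠ x in atTop, mTail ν (b * x) / mTail ν x ≤ c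

/-- Consistently varying class `𝓒`. -/
def MemC (ν : Measure ℝ) : Prop :=
  Tendsto (fun b : ℝ => Filter.liminf (fun x => mTail ν (b * x) / mTail ν x) atTop)
    (nhdsWithin 1 (Set.Ioi 1)) (𝓝 1)

/-- `𝓐 = 𝓢 ∩ 𝓟𝓓`. -/
def MemA (ν : Measure ℝ) : Prop := MemS ν ∧ MemPD ν

/-- `𝓣 = 𝓛 ∩ 𝓟𝓓`. -/
def MemT (ν : Measure ℝ) : Prop := MemL ν ∧ MemPD ν

/-- Regular variation of index `-α` of the tail of `ν`. -/
def MemRV (ν : Measure ℝ) (α : ℝ) : Prop :=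
  ∀ t : ℝ, 0 < t → Tendsto (fun x => mTail ν (t * x) / mTail ν x) atTop (𝓝 (t ^ (-α)))

/-- Weak tail-equivalence `f ≍ g`. -/
def WeakTailEquiv (f g : ℝ → ℝ) : Prop :=
  ∃ c₁ c₂ : ℝ, 0 < c₁ ∧ ∀ᶠ x in atTop, c₁ * g x ≤ f x ∧ f x ≤ c₂ * g x

/-- (Standard) multivariate regular variation `F ∈ MRV(α, V, μ)` of the distribution of `X`. -/
structure IsMRV (P : Measure Ω) (X : Ω → Fin d → ℝ) (α : ℝ) (V : Measure ℝ)
    (μ : Measure (Fin d → ℝ)) : Prop where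
  alpha_pos : 0 < α
  V_prob : IsProbabilityMeasure V
  V_rv : MemRV V α
  mu_ne_zero : ∃ B : Set (Fin d → ℝ), (0 : Fin d → ℝ) ∉ closure B ∧ 0 < μ B
  mu_radon : ∀ B : Set (Fin d → ℝ), (0 : Fin d → ℝ) ∉ closure B → μ B ≠ ⊤
  tendsto : ∀ B : Set (Fin d → ℝ), MeasurableSet B → (0 : Fin d → ℝ) ∉ closure B →
    μ (frontier B) = 0 →
    Tendsto (fun x => vTail P B X x / mTail V x) atTop (𝓝 ((μ B).toReal))

/-- Support of a distribution on `ℝ`. -/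
def measSupport (ν : Measure ℝ) : Set ℝ := {t | ∀ U ∈ 𝓝 t, 0 < ν U}

/-- Assumption `CD_A`: conditional dependence of `(X, Θ)` on `A` with transfer function `h`:
`P[Y_A > x | Θ = t] ~ h(t) P[Y_A > x]` uniformly on the support of the distribution of `Θ`. -/
def CDA (P : Measure Ω) [IsFiniteMeasure P] (A : Set (Fin d → ℝ))
    (X : Ω → Fin d → ℝ) (Θ : Ω → ℝ) (h : ℝ → ℝ) : Prop :=
  ∀ ε : ℝ, 0 < ε → ∀ᶠ x in atTop, ∀ t ∈ measSupport (P.map Θ),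
    |((condDistrib (fun ω => suprA A (X ω)) Θ P) t (Set.Ioi x)).toReal /
        (h t * (P {ω | x < suprA A (X ω)}).toReal) - 1| ≤ ε

/-- Assumption `B_A`: `P[Θ > c x] = o(P[Θ Y_A > x])` for all `c > 0`. -/
def BA (P : Measure Ω) (A : Set (Fin d → ℝ)) (X : Ω → Fin d → ℝ) (Θ : Ω → ℝ) : Prop :=
  ∀ c : ℝ, 0 < c →
    Tendsto (fun x => (P {ω | c * x < Θ ω}).toReal /
      (P {ω | x < Θ ω * suprA A (X ω)}).toReal) atTop (𝓝 0)

/-- Assumption `B_A` in the form `P[Θ > c x] = o(P[Θ X ∈ x A])` for all `c > 0`. -/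
def BA' (P : Measure Ω) (A : Set (Fin d → ℝ)) (X : Ω → Fin d → ℝ) (Θ : Ω → ℝ) : Prop :=
  ∀ c : ℝ, 0 < c →
    Tendsto (fun x => (P {ω | c * x < Θ ω}).toReal /
      (P {ω | Θ ω • X ω ∈ x • A}).toReal) atTop (𝓝 0)

/-!
Reweighting the law of `Θ` by the transfer function `h` gives a finite measure `G`, and by the
uniformity in Assumption `CDA` the tail of `Θ Y_A` is equivalent to that of a product of
independent factors with laws `G` and `F_A`, namely `∫ F_A (x / t, ∞) dG(t)`. Assumption `BA` makes
the values of `t` comparable to `x` negligible in this integral, so that asymptotic inequalities in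
the argument `x / t` can be integrated: this transfers `𝓒`, `𝓓` and `𝓟𝓓`, which compare the tails
at `b z` and at `z`. For `𝓛`, a shift of `x` by `a` becomes a shift of `x / t` by `a / t`, which is
unbounded for small `t`; but small values of `t` contribute little, since `F_A (x / t, ∞)`
decreases as `t` does.

Subexponentiality is used in the form of `𝓛` together with the requirement that it be negligible
for both summands to be large while their sum exceeds `x`. For independent copies `T₁ Y₁`, `T₂ Y₂`
with `T₂ ≤ T₁`, this requirement follows from the one for `Y₁ + Y₂` at level `x / T₁`, up to events
on which `T₁` is comparable to `x` or one of the two `Yᵢ` is bounded while `T₁` or `T₂` is large.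
-/

open Set
open scoped ENNReal NNReal

section AsymptoticLE

/-- `limsup f / g ≤ r` at infinity, in the division-free form that every factor `s > r` eventually
bounds `f` by `s * g`; it makes sense even where `g` vanishes. -/
def AsymptoticLE (r : ℝ≥0∞) (f g : ℝ → ℝ≥0∞) : Prop :=
  ∀ s, r < s → ∀ᶠ x in atTop, f x ≤ s * g x

variable {r s c : ℝ≥0∞} {f f₁ f₂ g k : ℝ → ℝ≥0∞}

lemma AsymptoticLE.of_eventually_le (h : ∀ᶠ x in atTop, f x ≤ r * g x) : AsymptoticLE r f g := by
  intro s hs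
  filter_upwards [h] with x hx
  exact hx.trans (by gcongr)

lemma AsymptoticLE.of_forall_gt (h : ∀ s, r < s → AsymptoticLE s f g) : AsymptoticLE r f g := by
  intro s hs
  obtain ⟨u, hru, hus⟩ := exists_between hs
  exact h u hru s hus

lemma AsymptoticLE.mono (h : AsymptoticLE r f g) (hrs : r ≤ s) : AsymptoticLE s f g :=
  fun u hu => h u (hrs.trans_lt hu)

lemma AsymptoticLE.mono_left (h : AsymptoticLE r f₂ g) (hf : ∀ᶠ x in atTop, f₁ x ≤ f₂ x) :
    AsymptoticLE r f₁ g := by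
  intro s hs
  filter_upwards [h s hs, hf] with x hx hfx using hfx.trans hx

lemma AsymptoticLE.comp_tendsto (h : AsymptoticLE r f g) {φ : ℝ → ℝ}
    (hφ : Tendsto φ atTop atTop) :
    AsymptoticLE r (fun x => f (φ x)) (fun x => g (φ x)) :=
  fun s hs => hφ.eventually (h s hs)

lemma AsymptoticLE.trans (hfg : AsymptoticLE r f g) (hgk : AsymptoticLE s g k)
    (hr : r ≠ ⊤) (hs : s ≠ ⊤) : AsymptoticLE (r * s) f k := by
  intro u hu
  have : (𝓝[>] r).NeBot := nhdsGT_neBot_of_exists_gt ⟨⊤, hr.lt_top⟩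
  have : (𝓝[>] s).NeBot := nhdsGT_neBot_of_exists_gt ⟨⊤, hs.lt_top⟩
  have hlt : ∀ᶠ p : ℝ≥0∞ × ℝ≥0∞ in 𝓝[>] r ×ˢ 𝓝[>] s, p.1 * p.2 < u :=
    ((ENNReal.tendsto_mul (Or.inr hs) (Or.inr hr)).mono_left
      ((Filter.prod_mono nhdsWithin_le_nhds nhdsWithin_le_nhds).trans
        nhds_prod_eq.ge)).eventually_lt_const hu
  obtain ⟨⟨r', s'⟩, hmul, hr', hs'⟩ :=
    (hlt.and (prod_mem_prod self_mem_nhdsWithin self_mem_nhdsWithin)).exists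
  filter_upwards [hfg r' hr', hgk s' hs'] with x hfx hgx
  calc f x ≤ r' * g x := hfx
    _ ≤ r' * (s' * k x) := by gcongr
    _ = r' * s' * k x := (mul_assoc _ _ _).symm
    _ ≤ u * k x := by gcongr

lemma AsymptoticLE.add (h₁ : AsymptoticLE r f₁ g) (h₂ : AsymptoticLE s f₂ g) :
    AsymptoticLE (r + s) (fun x => f₁ x + f₂ x) g := by
  intro u hu
  obtain ⟨r', hr', hr'u⟩ : ∃ r', r < r' ∧ r' < u - s :=
    exists_between (lt_tsub_iff_right.2 hu)
  have hs' : s < u - r' := lt_tsub_comm.1 hr'u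
  filter_upwards [h₁ r' hr', h₂ (u - r') hs'] with x hx₁ hx₂
  calc f₁ x + f₂ x ≤ r' * g x + (u - r') * g x := add_le_add hx₁ hx₂
    _ = u * g x := by rw [← add_mul, add_tsub_cancel_of_le (hr'u.le.trans tsub_le_self)]

lemma AsymptoticLE.const_mul (h : AsymptoticLE r f g) (hc : c ≠ ⊤) (hr : r ≠ ⊤) :
    AsymptoticLE (c * r) (fun x => c * f x) g :=
  (AsymptoticLE.of_eventually_le (.of_forall fun _ => le_rfl)).trans h hc hr

/-- A multiple `r < 1` of `f` itself on the right-hand side can be absorbed. -/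
lemma AsymptoticLE.of_max (h : AsymptoticLE r f fun x => max (g x) (f x)) (hr : r < 1)
    (hf : ∀ x, f x ≠ ⊤) : AsymptoticLE r f g := by
  intro s hs
  obtain ⟨u, hru, hu⟩ := exists_between (lt_min hs hr)
  filter_upwards [h u hru] with x hx
  rcases le_total (f x) (g x) with hfg | hgf
  · rw [max_eq_left hfg] at hx
    exact hx.trans (by gcongr; exact (hu.trans_le (min_le_left _ _)).le)
  · rw [max_eq_right hgf] at hx
    have hf0 : f x = 0 := by
      by_contra hf0
      refine hx.not_gt ?_
      simpa using ENNReal.mul_lt_mul_left hf0 (hf x) (hu.trans_le (min_le_right _ _))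
    simp [hf0]

end AsymptoticLE

section TailClasses

/-- The tail of a measure on the line, with values in `ℝ≥0∞`. -/
abbrev tail (ν : Measure ℝ) (x : ℝ) : ℝ≥0∞ := ν (Ioi x)

variable {ν : Measure ℝ}

lemma tail_antitone (ν : Measure ℝ) : Antitone (tail ν) :=
  fun _ _ h => measure_mono (Ioi_subset_Ioi h)

lemma isBoundedUnder_mTail_mul_div (b : ℝ) :
    IsBoundedUnder (· ≥ ·) atTop (fun x => mTail ν (b * x) / mTail ν x) :=
  isBoundedUnder_of ⟨0, fun _ => div_nonneg ENNReal.toReal_nonneg ENNReal.toReal_nonneg⟩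

variable [IsFiniteMeasure ν]

lemma mTail_pos (hν : ∀ x, tail ν x ≠ 0) (x : ℝ) : 0 < mTail ν x :=
  ENNReal.toReal_pos (hν x) (measure_ne_top _ _)

lemma mTail_antitone : Antitone (mTail ν) :=
  fun _ _ h => ENNReal.toReal_mono (measure_ne_top _ _) (tail_antitone ν h)

lemma ofReal_mTail (x : ℝ) : ENNReal.ofReal (mTail ν x) = tail ν x :=
  ENNReal.ofReal_toReal (measure_ne_top _ _)

variable {μ : Measure ℝ} [IsFiniteMeasure μ]

lemma mTail_div_le_iff (hν : ∀ x, tail ν x ≠ 0) {a b r : ℝ} (hr : 0 ≤ r) :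
    mTail μ a / mTail ν b ≤ r ↔ tail μ a ≤ ENNReal.ofReal r * tail ν b := by
  rw [div_le_iff₀ (mTail_pos hν b), ← ofReal_mTail, ← ofReal_mTail, ← ENNReal.ofReal_mul hr,
    ENNReal.ofReal_le_ofReal_iff (mul_nonneg hr (mTail_pos hν b).le)]

lemma asymptoticLE_tail_iff (hν : ∀ x, tail ν x ≠ 0) {r : ℝ} (hr : 0 ≤ r) {φ : ℝ → ℝ} :
    AsymptoticLE (ENNReal.ofReal r) (fun x => tail μ (φ x)) (tail ν) ↔
      ∀ s, r < s → ∀ᶠ x in atTop, mTail μ (φ x) / mTail ν x ≤ s := by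
  constructor
  · intro h s hs
    filter_upwards [h _ ((ENNReal.ofReal_lt_ofReal_iff (hr.trans_lt hs)).2 hs)] with x hx
    exact (mTail_div_le_iff hν (hr.trans hs.le)).2 hx
  · intro h s hs
    obtain ⟨u, hu0, hru, hus⟩ := ENNReal.lt_iff_exists_real_btwn.1 hs
    filter_upwards [h u ((ENNReal.ofReal_lt_ofReal_iff_of_nonneg hr).1 hru)] with x hx
    exact ((mTail_div_le_iff hν hu0).1 hx).trans (by gcongr)

lemma asymptoticLE_tail_of_mTail_div_le (hν : ∀ x, tail ν x ≠ 0) {r : ℝ} (hr : 0 ≤ r)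
    {φ : ℝ → ℝ} (h : ∀ᶠ x in atTop, mTail μ (φ x) / mTail ν x ≤ r) :
    AsymptoticLE (ENNReal.ofReal r) (fun x => tail μ (φ x)) (tail ν) :=
  (asymptoticLE_tail_iff hν hr).2 fun _ hs => h.mono fun _ hx => hx.trans hs.le

lemma memD_iff (hν : ∀ x, tail ν x ≠ 0) :
    MemD ν ↔ ∀ y : ℝ, 0 < y → y < 1 →
      ∃ C : ℝ≥0∞, C ≠ ⊤ ∧ AsymptoticLE C (fun x => tail ν (y * x)) (tail ν) := by
  refine forall₃_congr fun y _ _ => ⟨?_, ?_⟩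
  · rintro ⟨C, hC⟩
    exact ⟨_, ENNReal.ofReal_ne_top, asymptoticLE_tail_of_mTail_div_le hν (le_max_right C 0)
      (hC.mono fun _ hx => hx.trans (le_max_left C 0))⟩
  · rintro ⟨C, hC, h⟩
    rw [← ENNReal.ofReal_toReal hC, asymptoticLE_tail_iff hν ENNReal.toReal_nonneg] at h
    exact ⟨C.toReal + 1, h _ (lt_add_one _)⟩

lemma memPD_iff (hν : ∀ x, tail ν x ≠ 0) :
    MemPD ν ↔ ∀ b : ℝ, 1 < b →
      ∃ c : ℝ≥0∞, c < 1 ∧ AsymptoticLE c (fun x => tail ν (b * x)) (tail ν) := by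
  refine forall₂_congr fun b _ => ⟨?_, ?_⟩
  · rintro ⟨c, hc, h⟩
    exact ⟨_, ENNReal.ofReal_lt_one.2 (max_lt hc one_pos),
      asymptoticLE_tail_of_mTail_div_le hν (le_max_right c 0)
        (h.mono fun _ hx => hx.trans (le_max_left c 0))⟩
  · rintro ⟨c, hc, h⟩
    rw [← ENNReal.ofReal_toReal hc.ne_top, asymptoticLE_tail_iff hν ENNReal.toReal_nonneg] at h
    obtain ⟨c', hcc', hc'⟩ : ∃ c', c.toReal < c' ∧ c' < 1 :=
      exists_between ((ENNReal.toReal_lt_toReal hc.ne_top ENNReal.one_ne_top).2 hc)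
    exact ⟨c', hc', h c' hcc'⟩

/-- Long-tailedness in asymptotic form; for a finite measure with positive tails this is `MemL`. -/
def LongTailed (ν : Measure ℝ) : Prop :=
  ∀ a : ℝ, 0 < a → AsymptoticLE 1 (fun x => tail ν (x - a)) (tail ν)

lemma one_le_mTail_div (hν : ∀ x, tail ν x ≠ 0) {a b : ℝ} (h : a ≤ b) :
    1 ≤ mTail ν a / mTail ν b :=
  (one_le_div (mTail_pos hν b)).2 (mTail_antitone h)

lemma memL_iff_longTailed (hν : ∀ x, tail ν x ≠ 0) : MemL ν ↔ LongTailed ν := by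
  refine forall₂_congr fun a ha => ?_
  rw [← ENNReal.ofReal_one, asymptoticLE_tail_iff hν zero_le_one]
  constructor
  · exact fun h s hs => h.eventually_le_const hs
  · refine fun h => tendsto_order.2 ⟨fun s hs => ?_, fun s hs => ?_⟩
    · exact .of_forall fun x => hs.trans_le (one_le_mTail_div hν (sub_le_self x ha.le))
    · obtain ⟨u, h1u, hus⟩ := exists_between hs
      exact (h u h1u).mono fun x hx => hx.trans_lt hus

/-- Consistent variation in asymptotic form, with the dilation factor below `1` instead of above;
for a finite measure with positive tails this is `MemC`. -/
def ConsistentlyVarying (ν : Measure ℝ) : Prop :=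
  ∀ r : ℝ≥0∞, 1 < r → ∃ b : ℝ, 0 < b ∧ b < 1 ∧ AsymptoticLE r (fun x => tail ν (b * x)) (tail ν)

lemma eventually_mTail_mul_div_le_one {b : ℝ} (hb : 1 < b) :
    ∀ᶠ x in atTop, mTail ν (b * x) / mTail ν x ≤ 1 := by
  filter_upwards [eventually_ge_atTop 0] with x hx
  exact div_le_one_of_le₀ (mTail_antitone (le_mul_of_one_le_left hx hb.le)) ENNReal.toReal_nonneg

lemma MemC.consistentlyVarying (hν : ∀ x, tail ν x ≠ 0) (h : MemC ν) :
    ConsistentlyVarying ν := by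
  intro r hr
  obtain ⟨u, -, h1u, hur⟩ := ENNReal.lt_iff_exists_real_btwn.1 hr
  have hu : 1 < u := ENNReal.one_lt_ofReal.1 h1u
  obtain ⟨b, hb, hb1 : 1 < b⟩ :=
    ((h.eventually_const_lt (inv_lt_one_of_one_lt₀ hu)).and self_mem_nhdsWithin).exists
  have hb0 : 0 < b := one_pos.trans hb1
  refine ⟨b⁻¹, inv_pos.2 hb0, inv_lt_one_of_one_lt₀ hb1, ?_⟩
  refine (asymptoticLE_tail_of_mTail_div_le hν (zero_le_one.trans hu.le) ?_).mono hur.le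
  have hlarge : Tendsto (fun x : ℝ => b⁻¹ * x) atTop atTop :=
    tendsto_id.const_mul_atTop (inv_pos.2 hb0)
  filter_upwards [hlarge.eventually
    (eventually_lt_of_lt_liminf hb (isBoundedUnder_mTail_mul_div b))] with x hx
  rw [mul_inv_cancel_left₀ hb0.ne'] at hx
  rw [← inv_div]
  exact inv_le_of_inv_le₀ (one_pos.trans hu) hx.le

lemma ConsistentlyVarying.eventually_le_liminf (hν : ∀ x, tail ν x ≠ 0)
    (h : ConsistentlyVarying ν) {u : ℝ} (hu : 1 < u) :
    ∀ᶠ c in 𝓝[>] 1, u⁻¹ ≤ liminf (fun x => mTail ν (c * x) / mTail ν x) atTop := by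
  obtain ⟨v, h1v, hvu⟩ := exists_between hu
  obtain ⟨b, hb0, hb1, hb⟩ := h (ENNReal.ofReal v) (ENNReal.one_lt_ofReal.2 h1v)
  have hlarge : Tendsto (fun x : ℝ => b⁻¹ * x) atTop atTop :=
    tendsto_id.const_mul_atTop (inv_pos.2 hb0)
  have hratio := hlarge.eventually
    ((asymptoticLE_tail_iff hν (zero_le_one.trans h1v.le)).1 hb u hvu)
  filter_upwards [Ioo_mem_nhdsGT ((one_lt_inv₀ hb0).2 hb1)] with c hc
  refine le_liminf_of_le
    (isBoundedUnder_of_eventually_le (eventually_mTail_mul_div_le_one hc.1)).isCoboundedUnder_ge ?_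
  filter_upwards [hratio, eventually_ge_atTop 0] with x hx hx0
  rw [mul_inv_cancel_left₀ hb0.ne'] at hx
  calc u⁻¹ ≤ (mTail ν x / mTail ν (b⁻¹ * x))⁻¹ :=
        inv_anti₀ (div_pos (mTail_pos hν _) (mTail_pos hν _)) hx
    _ = mTail ν (b⁻¹ * x) / mTail ν x := inv_div _ _
    _ ≤ mTail ν (c * x) / mTail ν x := by
        gcongr
        · exact ENNReal.toReal_nonneg
        · exact mTail_antitone (mul_le_mul_of_nonneg_right hc.2.le hx0)

lemma ConsistentlyVarying.memC (hν : ∀ x, tail ν x ≠ 0) (h : ConsistentlyVarying ν) :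
    MemC ν := by
  refine tendsto_order.2 ⟨fun a ha => ?_, fun a ha => ?_⟩
  · obtain ⟨u, hu, hau⟩ : ∃ u : ℝ, 1 < u ∧ a < u⁻¹ := by
      obtain ⟨v, hv, hv1⟩ := exists_between (max_lt ha one_pos)
      have hv0 : 0 < v := (le_max_right _ _).trans_lt hv
      exact ⟨v⁻¹, (one_lt_inv₀ hv0).2 hv1, by simpa using (le_max_left _ _).trans_lt hv⟩
    filter_upwards [h.eventually_le_liminf hν hu] with c hc using hau.trans_le hc
  · filter_upwards [self_mem_nhdsWithin] with c hc
    refine (liminf_le_of_frequently_le ?_ (isBoundedUnder_mTail_mul_div c)).trans_lt ha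
    exact (eventually_mTail_mul_div_le_one hc).frequently

lemma memC_iff_consistentlyVarying (hν : ∀ x, tail ν x ≠ 0) : MemC ν ↔ ConsistentlyVarying ν :=
  ⟨MemC.consistentlyVarying hν, ConsistentlyVarying.memC hν⟩

end TailClasses

section Subexponential

/-- The mass under `μ ⊗ ν` of the pairs whose entries both exceed `K` and whose sum exceeds `x`. -/
noncomputable def jointExceedance (μ ν : Measure ℝ) (K x : ℝ) : ℝ≥0∞ :=
  (μ.prod ν) {p | K < p.1 ∧ K < p.2 ∧ x < p.1 + p.2}

/-- A sum of two independent variables with law `ν` is unlikely to be large without one of the two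
summands being bounded. Together with `LongTailed` this characterises `MemS`. -/
def NegligibleJointExceedance (ν : Measure ℝ) : Prop :=
  ∀ ε : ℝ≥0∞, ε ≠ 0 → ∃ K : ℝ, AsymptoticLE ε (jointExceedance ν ν K) (tail ν)

lemma measurableSet_jointExceedance (K x : ℝ) :
    MeasurableSet {p : ℝ × ℝ | K < p.1 ∧ K < p.2 ∧ x < p.1 + p.2} :=
  (measurableSet_lt measurable_const measurable_fst).inter
    ((measurableSet_lt measurable_const measurable_snd).inter
      (measurableSet_lt measurable_const (measurable_fst.add measurable_snd)))

lemma jointExceedance_antitone (μ ν : Measure ℝ) (x : ℝ) :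
    Antitone fun K => jointExceedance μ ν K x :=
  fun _ _ h => measure_mono fun _ hp => ⟨h.trans_lt hp.1, h.trans_lt hp.2.1, hp.2.2⟩

lemma tendsto_tail_atTop (ν : Measure ℝ) [IsFiniteMeasure ν] : Tendsto (tail ν) atTop (𝓝 0) := by
  have hInter : ⋂ x : ℝ, Ioi x = ∅ :=
    eq_empty_of_forall_notMem fun y hy => lt_irrefl y (mem_iInter.1 hy y)
  rw [← measure_empty (μ := ν), ← hInter]
  exact tendsto_measure_iInter_atTop (fun _ => measurableSet_Ioi.nullMeasurableSet)
    antitone_Ioi ⟨0, measure_ne_top _ _⟩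

lemma tendsto_mTail_atTop (ν : Measure ℝ) [IsFiniteMeasure ν] : Tendsto (mTail ν) atTop (𝓝 0) :=
  (ENNReal.tendsto_toReal ENNReal.zero_ne_top).comp (tendsto_tail_atTop ν)

lemma mTail_mConv (ν : Measure ℝ) (x : ℝ) :
    mTail (mConv ν ν) x = (ν.prod ν).real {p | x < p.1 + p.2} := by
  rw [mTail, mConv, Measure.map_apply (by fun_prop) measurableSet_Ioi]
  rfl

variable {ν : Measure ℝ} [IsProbabilityMeasure ν]

lemma measureReal_Iic_eq_one_sub_mTail (a : ℝ) : ν.real (Iic a) = 1 - mTail ν a := by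
  rw [← compl_Ioi, probReal_compl_eq_one_sub measurableSet_Ioi]
  rfl

lemma measureReal_Ioc_eq_mTail_sub {a x : ℝ} (h : a ≤ x) :
    ν.real (Ioc a x) = mTail ν a - mTail ν x := by
  rw [← Ioi_sdiff_Ioi, measureReal_sdiff (Ioi_subset_Ioi h) measurableSet_Ioi]
  rfl

lemma measureReal_le_mTail_mConv (h0 : ∀ᵐ y ∂ν, 0 ≤ y) {x : ℝ} {s : Set (ℝ × ℝ)}
    (hs : ∀ p ∈ s, 0 ≤ p.1 → 0 ≤ p.2 → x < p.1 + p.2) :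
    (ν.prod ν).real s ≤ mTail (mConv ν ν) x := by
  rw [mTail_mConv]
  refine ENNReal.toReal_mono (measure_ne_top _ _) (measure_mono_ae ?_)
  filter_upwards [Measure.quasiMeasurePreserving_fst.ae h0,
    Measure.quasiMeasurePreserving_snd.ae h0] with p h₁ h₂ hp using hs p hp h₁ h₂

lemma le_mTail_mConv_of_le (h0 : ∀ᵐ y ∂ν, 0 ≤ y) {a x : ℝ} (hax : a ≤ x) :
    mTail ν x + (1 - mTail ν a) * mTail ν x + (mTail ν a - mTail ν x) * mTail ν (x - a) ≤
      mTail (mConv ν ν) x := by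
  have hfst : (ν.prod ν).real (Ioi x ×ˢ univ) = mTail ν x := by
    rw [measureReal_prod_prod, probReal_univ, mul_one]; rfl
  have hsnd : (ν.prod ν).real (Iic a ×ˢ Ioi x) = (1 - mTail ν a) * mTail ν x := by
    rw [measureReal_prod_prod, measureReal_Iic_eq_one_sub_mTail]; rfl
  have hmid : (ν.prod ν).real (Ioc a x ×ˢ Ioi (x - a)) =
      (mTail ν a - mTail ν x) * mTail ν (x - a) := by
    rw [measureReal_prod_prod, measureReal_Ioc_eq_mTail_sub hax]; rfl
  rw [← hmid, ← hsnd, ← hfst, ← measureReal_union _ (measurableSet_Iic.prod measurableSet_Ioi),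
    ← measureReal_union _ (measurableSet_Ioc.prod measurableSet_Ioi)]
  · refine measureReal_le_mTail_mConv h0 fun p hp h₁ h₂ => ?_
    rcases hp with (hp | hp) | hp <;>
      simp only [mem_prod, mem_Ioi, mem_Iic, mem_Ioc, mem_univ] at hp <;> linarith
  · refine disjoint_left.2 fun p hp hp' => ?_
    rcases hp with hp | hp <;>
      simp only [mem_prod, mem_Ioi, mem_Iic, mem_Ioc, mem_univ] at hp hp' <;> linarith
  · refine disjoint_left.2 fun p hp hp' => ?_
    simp only [mem_prod, mem_Ioi, mem_Iic, mem_univ] at hp hp'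
    linarith

lemma add_jointExceedance_le_mTail_mConv (h0 : ∀ᵐ y ∂ν, 0 ≤ y) {K x : ℝ} (hKx : K ≤ x) :
    2 * (1 - mTail ν K) * mTail ν x + (jointExceedance ν ν K x).toReal ≤
      mTail (mConv ν ν) x := by
  have hsnd : (ν.prod ν).real (Iic K ×ˢ Ioi x) = (1 - mTail ν K) * mTail ν x := by
    rw [measureReal_prod_prod, measureReal_Iic_eq_one_sub_mTail]; rfl
  have hfst : (ν.prod ν).real (Ioi x ×ˢ Iic K) = (1 - mTail ν K) * mTail ν x := by
    rw [measureReal_prod_prod, measureReal_Iic_eq_one_sub_mTail, mul_comm]; rfl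
  have hjoint : (jointExceedance ν ν K x).toReal =
    (ν.prod ν).real {p | K < p.1 ∧ K < p.2 ∧ x < p.1 + p.2} := rfl
  rw [mul_assoc, two_mul]
  nth_rw 1 [← hsnd]
  rw [← hfst, hjoint, ← measureReal_union _ (measurableSet_Ioi.prod measurableSet_Iic),
    ← measureReal_union _ (measurableSet_jointExceedance K x)]
  · refine measureReal_le_mTail_mConv h0 fun p hp h₁ h₂ => ?_
    rcases hp with (hp | hp) | hp
    · exact (mem_Ioi.1 hp.2).trans_le (le_add_of_nonneg_left h₁)
    · exact (mem_Ioi.1 hp.1).trans_le (le_add_of_nonneg_right h₂)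
    · exact hp.2.2
  · refine disjoint_left.2 fun p hp hp' => ?_
    rcases hp with hp | hp
    · exact (mem_Iic.1 hp.1).not_gt hp'.1
    · exact (mem_Iic.1 hp.2).not_gt hp'.2.1
  · exact disjoint_left.2 fun p hp hp' => ((mem_Iic.1 hp.1).trans hKx).not_gt hp'.1

lemma mTail_mConv_le_add_jointExceedance (K x : ℝ) :
    mTail (mConv ν ν) x ≤ 2 * mTail ν (x - K) + (jointExceedance ν ν K x).toReal := by
  have hsnd : (ν.prod ν).real (univ ×ˢ Ioi (x - K)) = mTail ν (x - K) := by
    rw [measureReal_prod_prod, probReal_univ, one_mul]; rfl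
  have hfst : (ν.prod ν).real (Ioi (x - K) ×ˢ univ) = mTail ν (x - K) := by
    rw [measureReal_prod_prod, probReal_univ, mul_one]; rfl
  have hcover : {p : ℝ × ℝ | x < p.1 + p.2} ⊆
      (univ ×ˢ Ioi (x - K) ∪ Ioi (x - K) ×ˢ univ) ∪
        {p | K < p.1 ∧ K < p.2 ∧ x < p.1 + p.2} := by
    intro p (hp : x < p.1 + p.2)
    rcases le_or_gt p.1 K with h₁ | h₁
    · exact .inl (.inl ⟨mem_univ _, mem_Ioi.2 (by linarith)⟩)
    rcases le_or_gt p.2 K with h₂ | h₂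
    · exact .inl (.inr ⟨mem_Ioi.2 (by linarith), mem_univ _⟩)
    · exact .inr ⟨h₁, h₂, hp⟩
  calc mTail (mConv ν ν) x
      ≤ (ν.prod ν).real (univ ×ˢ Ioi (x - K)) + (ν.prod ν).real (Ioi (x - K) ×ˢ univ) +
          (jointExceedance ν ν K x).toReal := by
        rw [mTail_mConv]
        exact (measureReal_mono hcover).trans
          ((measureReal_union_le _ _).trans (add_le_add_left (measureReal_union_le _ _) _))
    _ = 2 * mTail ν (x - K) + (jointExceedance ν ν K x).toReal := by rw [hsnd, hfst, two_mul]

lemma MemS.longTailed (h0 : ∀ᵐ y ∂ν, 0 ≤ y) (hν : ∀ x, tail ν x ≠ 0) (h : MemS ν) :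
    LongTailed ν := by
  refine (memL_iff_longTailed hν).1 fun a ha => ?_
  have hta : 0 < mTail ν a := mTail_pos hν a
  have htail : Tendsto (mTail ν) atTop (𝓝 0) := tendsto_mTail_atTop ν
  have hlim : Tendsto (fun x => (mTail (mConv ν ν) x / mTail ν x - 2 + mTail ν a) /
      (mTail ν a - mTail ν x)) atTop (𝓝 1) := by
    simpa [hta.ne', Pi.div_def] using ((h.sub_const 2).add_const (mTail ν a)).div
      (htail.const_sub (mTail ν a)) (by simpa using hta.ne')
  refine tendsto_of_tendsto_of_tendsto_of_le_of_le' tendsto_const_nhds hlim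
    (.of_forall fun x => one_le_mTail_div hν (sub_le_self x ha.le)) ?_
  filter_upwards [htail.eventually_lt_const hta, eventually_ge_atTop a] with x hx hax
  have htx : 0 < mTail ν x := mTail_pos hν x
  rw [div_le_div_iff₀ htx (sub_pos.2 hx)]
  have hexpand : (mTail (mConv ν ν) x / mTail ν x - 2 + mTail ν a) * mTail ν x =
      mTail (mConv ν ν) x - (2 - mTail ν a) * mTail ν x := by
    field_simp
    ring
  linarith [le_mTail_mConv_of_le h0 hax]

lemma MemS.negligibleJointExceedance (h0 : ∀ᵐ y ∂ν, 0 ≤ y) (hν : ∀ x, tail ν x ≠ 0)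
    (h : MemS ν) : NegligibleJointExceedance ν := by
  intro ε hε
  obtain ⟨r, hr0, hr, hrε⟩ := ENNReal.lt_iff_exists_real_btwn.1 (pos_iff_ne_zero.2 hε)
  replace hr : 0 < r := ENNReal.ofReal_pos.1 hr
  obtain ⟨K, hK⟩ := ((tendsto_mTail_atTop ν).eventually_lt_const (by linarith : 0 < r / 4)).exists
  refine ⟨K, (AsymptoticLE.of_eventually_le ?_).mono hrε.le⟩
  filter_upwards [h.eventually_lt_const (by linarith : (2 : ℝ) < 2 + r / 2),
    eventually_ge_atTop K] with x hx hKx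
  have htx : 0 < mTail ν x := mTail_pos hν x
  rw [div_lt_iff₀ htx] at hx
  have hjoint : (jointExceedance ν ν K x).toReal ≤ r * mTail ν x := by
    nlinarith [add_jointExceedance_le_mTail_mConv h0 hKx]
  rw [← ofReal_mTail, ← ENNReal.ofReal_mul hr0]
  exact (ENNReal.le_ofReal_iff_toReal_le (measure_ne_top _ _) (mul_nonneg hr0 htx.le)).2 hjoint

lemma memS_of_longTailed_of_negligibleJointExceedance (h0 : ∀ᵐ y ∂ν, 0 ≤ y)
    (hν : ∀ x, tail ν x ≠ 0) (hL : LongTailed ν) (hJ : NegligibleJointExceedance ν) :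
    MemS ν := by
  refine tendsto_order.2 ⟨fun a ha => ?_, fun a ha => ?_⟩
  · filter_upwards [(tendsto_mTail_atTop ν).eventually_lt_const (by linarith : 0 < (2 - a) / 2)]
      with x hx
    rw [lt_div_iff₀ (mTail_pos hν x)]
    have hjoint : 0 ≤ (jointExceedance ν ν x x).toReal := ENNReal.toReal_nonneg
    nlinarith [add_jointExceedance_le_mTail_mConv h0 le_rfl (K := x), mTail_pos hν x]
  · obtain ⟨K, hK⟩ := hJ (ENNReal.ofReal ((a - 2) / 5)) (by simpa using ha)
    have hshift := ((memL_iff_longTailed hν).2 hL (max K 1) (by positivity)).eventually_lt_const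
      (by linarith : 1 < 1 + (a - 2) / 4)
    filter_upwards [hK (ENNReal.ofReal ((a - 2) / 4))
      ((ENNReal.ofReal_lt_ofReal_iff (by linarith)).2 (by linarith)), hshift] with x hx hshift
    have hjoint : (jointExceedance ν ν (max K 1) x).toReal ≤ (a - 2) / 4 * mTail ν x := by
      refine ENNReal.toReal_le_of_le_ofReal
        (mul_nonneg (by linarith) ENNReal.toReal_nonneg) ?_
      rw [ENNReal.ofReal_mul (by linarith), ofReal_mTail]
      exact (jointExceedance_antitone ν ν x (le_max_left K 1)).trans hx
    have htx : 0 < mTail ν x := mTail_pos hν x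
    rw [div_lt_iff₀ htx] at hshift ⊢
    nlinarith [mTail_mConv_le_add_jointExceedance (ν := ν) (max K 1) x]

lemma memS_iff (h0 : ∀ᵐ y ∂ν, 0 ≤ y) (hν : ∀ x, tail ν x ≠ 0) :
    MemS ν ↔ LongTailed ν ∧ NegligibleJointExceedance ν :=
  ⟨fun h => ⟨h.longTailed h0 hν, h.negligibleJointExceedance h0 hν⟩,
    fun h => memS_of_longTailed_of_negligibleJointExceedance h0 hν h.1 h.2⟩

end Subexponential

section Products

lemma measurable_tail (F : Measure ℝ) : Measurable (tail F) := (tail_antitone F).measurable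

/-- The tail of `G` is negligible with respect to that of `H`, at every scale. For the law `G` of
`Θ` and the law `H` of the product this is Assumption `BA`. -/
def TailNegligible (G H : Measure ℝ) : Prop :=
  ∀ c : ℝ, 0 < c → AsymptoticLE 0 (fun x => tail G (c * x)) (tail H)

variable {G F : Measure ℝ}

lemma tail_mconv [SFinite F] (hG : ∀ᵐ t ∂G, 0 < t) (x : ℝ) :
    tail (G ∗ₘ F) x = ∫⁻ t, tail F (x / t) ∂G := by
  have hmul : Measurable fun p : ℝ × ℝ => p.1 * p.2 := measurable_mul
  rw [tail, Measure.mconv, Measure.map_apply hmul measurableSet_Ioi,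
    Measure.prod_apply (hmul measurableSet_Ioi)]
  refine lintegral_congr_ae (hG.mono fun t ht => ?_)
  exact congrArg F (Set.ext fun y => (div_lt_iff₀' ht).symm)

lemma measure_Ici_mul_tail_le_tail_mconv [SFinite F] (hG : ∀ᵐ t ∂G, 0 < t) {t₀ x : ℝ}
    (ht₀ : 0 < t₀) (hx : 0 ≤ x) : G (Ici t₀) * tail F (x / t₀) ≤ tail (G ∗ₘ F) x := by
  rw [tail_mconv hG, mul_comm, ← setLIntegral_const]
  refine (setLIntegral_mono ((measurable_tail F).comp (by fun_prop)) fun t ht => ?_).trans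
    (setLIntegral_le_lintegral _ _)
  exact tail_antitone F (div_le_div_of_nonneg_left hx ht₀ ht)

/-- On the range `t > x / z₀`, where `huv` says nothing, `u` is bounded and `hneg` applies. -/
lemma asymptoticLE_lintegral_comp_div {u v : ℝ → ℝ → ℝ≥0∞} {k : ℝ → ℝ≥0∞} {c M : ℝ≥0∞}
    (hG : ∀ᵐ t ∂G, 0 < t) (hM : M ≠ ⊤) (hu : ∀ᵐ t ∂G, ∀ z, u t z ≤ M)
    (hv : ∀ᶠ x in atTop, ∫⁻ t, v t (x / t) ∂G ≤ k x)
    (hneg : ∀ a : ℝ, 0 < a → AsymptoticLE 0 (fun x => tail G (a * x)) k)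
    (huv : ∀ s, c < s → ∃ z₀, ∀ᵐ t ∂G, ∀ z, z₀ ≤ z → u t z ≤ s * v t z) :
    AsymptoticLE c (fun x => ∫⁻ t, u t (x / t) ∂G) k := by
  intro s hs
  obtain ⟨s', hcs', hs's⟩ := exists_between hs
  obtain ⟨z₀, hz₀⟩ := huv s' hcs'
  have hz : 0 < max z₀ 1 := by positivity
  have hlarge : AsymptoticLE 0 (fun x => M * tail G ((max z₀ 1)⁻¹ * x)) k := by
    simpa using (hneg _ (inv_pos.2 hz)).const_mul hM ENNReal.zero_ne_top
  filter_upwards [hlarge (s - s') (tsub_pos_of_lt hs's), hv] with x hx hvx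
  have hbound : ∀ᵐ t ∂G, u t (x / t) ≤
      s' * v t (x / t) + (Ioi ((max z₀ 1)⁻¹ * x)).indicator (fun _ => M) t := by
    filter_upwards [hG, hu, hz₀] with t ht hut huvt
    by_cases htx : t ∈ Ioi ((max z₀ 1)⁻¹ * x)
    · rw [indicator_of_mem htx]
      exact (hut _).trans le_add_self
    · refine (huvt _ ((le_max_left z₀ 1).trans ?_)).trans le_self_add
      rw [le_div_iff₀ ht, ← le_inv_mul_iff₀ hz]
      exact not_lt.1 htx
  calc ∫⁻ t, u t (x / t) ∂G
      ≤ ∫⁻ t, s' * v t (x / t) + (Ioi ((max z₀ 1)⁻¹ * x)).indicator (fun _ => M) t ∂G :=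
        lintegral_mono_ae hbound
    _ = s' * ∫⁻ t, v t (x / t) ∂G + M * tail G ((max z₀ 1)⁻¹ * x) := by
        rw [lintegral_add_right _ (measurable_const.indicator measurableSet_Ioi),
          lintegral_const_mul' _ _ hs's.ne_top, lintegral_indicator_const measurableSet_Ioi]
    _ ≤ s' * k x + (s - s') * k x := by gcongr
    _ = s * k x := by rw [← add_mul, add_tsub_cancel_of_le hs's.le]

lemma asymptoticLE_tail_mconv_mul [IsFiniteMeasure F] (hG : ∀ᵐ t ∂G, 0 < t)
    (hneg : TailNegligible G (G ∗ₘ F)) {b : ℝ} {c : ℝ≥0∞}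
    (hF : AsymptoticLE c (fun z => tail F (b * z)) (tail F)) :
    AsymptoticLE c (fun x => tail (G ∗ₘ F) (b * x)) (tail (G ∗ₘ F)) := by
  simp_rw [fun x => tail_mconv (F := F) hG (b * x), mul_div_assoc]
  refine asymptoticLE_lintegral_comp_div (u := fun _ z => tail F (b * z)) (v := fun _ => tail F)
    hG (measure_ne_top F univ) (.of_forall fun _ _ => measure_mono (subset_univ _))
    (.of_forall fun x => (tail_mconv hG x).ge) hneg fun s hs => ?_
  obtain ⟨z₀, hz₀⟩ := eventually_atTop.1 (hF s hs)
  exact ⟨z₀, .of_forall fun _ => hz₀⟩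

lemma tendsto_measure_Iio_nhdsGT_zero [IsFiniteMeasure G] (hG : ∀ᵐ t ∂G, 0 < t) :
    Tendsto (fun t => G (Iio t)) (𝓝[>] 0) (𝓝 0) := by
  have hInter : ⋂ t > (0 : ℝ), Iio t = Iic 0 :=
    Set.ext fun y => by simpa using forall_gt_iff_le
  have hnull : G (Iic 0) = 0 := by simpa [ae_iff, Iic_def] using hG
  have hlim := tendsto_measure_biInter_gt (μ := G) (s := Iio) (a := (0 : ℝ))
    (fun _ _ => measurableSet_Iio.nullMeasurableSet) (fun _ _ _ => Iio_subset_Iio)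
    ⟨1, one_pos, measure_ne_top _ _⟩
  rwa [hInter, hnull] at hlim

lemma exists_measure_Iio_le_mul_measure_Ici [IsFiniteMeasure G] (hG : ∀ᵐ t ∂G, 0 < t)
    (hG0 : G ≠ 0) {η : ℝ≥0∞} (hη : η ≠ 0) :
    ∃ t, 0 < t ∧ G (Iio t) ≤ η * G (Ici t) := by
  have hlim := tendsto_measure_Iio_nhdsGT_zero hG
  obtain ⟨t₁, ht₁, ht₁0 : 0 < t₁⟩ := ((hlim.eventually_lt_const
    (pos_iff_ne_zero.2 (Measure.measure_univ_ne_zero.2 hG0))).and self_mem_nhdsWithin).exists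
  have hIci : G (Ici t₁) ≠ 0 := by
    intro h
    have hle : G univ ≤ G (Iio t₁) + G (Ici t₁) := by
      rw [← Iio_union_Ici (a := t₁)]
      exact measure_union_le _ _
    exact ht₁.not_ge (by simpa [h] using hle)
  obtain ⟨t, ht, ht0, htt₁⟩ := ((hlim.eventually_lt_const
    (pos_iff_ne_zero.2 (mul_ne_zero hη hIci))).and (Ioo_mem_nhdsGT ht₁0)).exists
  refine ⟨t, ht0, ht.le.trans ?_⟩
  gcongr

lemma LongTailed.asymptoticLE_setLIntegral_Ici [IsFiniteMeasure F] (hF : LongTailed F)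
    (hG : ∀ᵐ t ∂G, 0 < t) (hneg : TailNegligible G (G ∗ₘ F)) {a t₀ : ℝ} (ha : 0 < a)
    (ht₀ : 0 < t₀) :
    AsymptoticLE 1 (fun x => ∫⁻ t in Ici t₀, tail F ((x - a) / t) ∂G) (tail (G ∗ₘ F)) := by
  simp_rw [sub_div]
  refine asymptoticLE_lintegral_comp_div (u := fun t z => tail F (z - a / t))
    (v := fun _ => tail F) (ae_restrict_of_ae hG) (measure_ne_top F univ)
    (.of_forall fun _ _ => measure_mono (subset_univ _)) (.of_forall fun x => ?_) (fun c hc => ?_)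
    fun s hs => ?_
  · exact (setLIntegral_le_lintegral _ _).trans (tail_mconv hG x).ge
  · exact (hneg c hc).mono_left (.of_forall fun _ => Measure.restrict_apply_le _ _)
  · obtain ⟨z₀, hz₀⟩ := eventually_atTop.1 (hF (a / t₀) (div_pos ha ht₀) s hs)
    refine ⟨z₀, (ae_restrict_mem measurableSet_Ici).mono fun t ht z hz =>
      (tail_antitone F ?_).trans (hz₀ z hz)⟩
    exact sub_le_sub_left (div_le_div_of_nonneg_left ha.le ht₀ ht) z

lemma LongTailed.asymptoticLE_setLIntegral_Iio [IsFiniteMeasure F] (hF : LongTailed F)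
    (hG : ∀ᵐ t ∂G, 0 < t) {a t₀ : ℝ} (ha : 0 < a) (ht₀ : 0 < t₀) {η : ℝ≥0∞}
    (hη : G (Iio t₀) ≤ η * G (Ici t₀)) (hηtop : η ≠ ⊤) :
    AsymptoticLE η (fun x => ∫⁻ t in Iio t₀, tail F ((x - a) / t) ∂G) (tail (G ∗ₘ F)) := by
  intro s hs
  have hshift := ((hF (a / t₀) (div_pos ha ht₀)).const_mul hηtop ENNReal.one_ne_top).comp_tendsto
    (tendsto_id.atTop_div_const ht₀)
  filter_upwards [hshift s (by rwa [mul_one]), eventually_ge_atTop a] with x hx hax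
  rw [id, ← sub_div] at hx
  have hanti : ∀ᵐ t ∂G.restrict (Iio t₀), tail F ((x - a) / t) ≤ tail F ((x - a) / t₀) := by
    filter_upwards [ae_restrict_of_ae hG, ae_restrict_mem measurableSet_Iio] with t ht htt₀
    exact tail_antitone F (div_le_div_of_nonneg_left (sub_nonneg.2 hax) ht htt₀.le)
  calc ∫⁻ t in Iio t₀, tail F ((x - a) / t) ∂G
      ≤ tail F ((x - a) / t₀) * G (Iio t₀) :=
        (lintegral_mono_ae hanti).trans_eq (setLIntegral_const _ _)
    _ ≤ tail F ((x - a) / t₀) * (η * G (Ici t₀)) := by gcongr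
    _ = G (Ici t₀) * (η * tail F ((x - a) / t₀)) := by ring
    _ ≤ G (Ici t₀) * (s * tail F (x / t₀)) := by gcongr
    _ = s * (G (Ici t₀) * tail F (x / t₀)) := by ring
    _ ≤ s * tail (G ∗ₘ F) x := by
        gcongr
        exact measure_Ici_mul_tail_le_tail_mconv hG ht₀ (ha.le.trans hax)

lemma LongTailed.mconv [IsFiniteMeasure G] [IsFiniteMeasure F] (hF : LongTailed F)
    (hG : ∀ᵐ t ∂G, 0 < t) (hG0 : G ≠ 0) (hneg : TailNegligible G (G ∗ₘ F)) :
    LongTailed (G ∗ₘ F) := by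
  refine fun a ha => AsymptoticLE.of_forall_gt fun r hr => ?_
  obtain ⟨η, hη0, hηr⟩ := exists_between (tsub_pos_of_lt hr)
  obtain ⟨t₀, ht₀, hη⟩ := exists_measure_Iio_le_mul_measure_Ici hG hG0 hη0.ne'
  refine (((hF.asymptoticLE_setLIntegral_Iio hG ha ht₀ hη hηr.ne_top).add
    (hF.asymptoticLE_setLIntegral_Ici hG hneg ha ht₀)).mono
      (lt_tsub_iff_right.1 hηr).le).mono_left (.of_forall fun x => le_of_eq ?_)
  rw [tail_mconv hG, ← lintegral_add_compl _ measurableSet_Iio, compl_Iio]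

end Products

section JointExceedance

lemma measurePreserving_prodProdProdComm {α β γ δ : Type*} [MeasurableSpace α]
    [MeasurableSpace β] [MeasurableSpace γ] [MeasurableSpace δ] (κ : Measure α) (μ : Measure β)
    (ν : Measure γ) (ρ : Measure δ) [SFinite κ] [SFinite μ] [SFinite ν] [SFinite ρ] :
    MeasurePreserving (fun p : (α × β) × γ × δ => ((p.1.1, p.2.1), (p.1.2, p.2.2)))
      ((κ.prod μ).prod (ν.prod ρ)) ((κ.prod ν).prod (μ.prod ρ)) :=
  ((measurePreserving_prodAssoc κ ν (μ.prod ρ)).symm _).comp <|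
    ((MeasurePreserving.id κ).prod <|
      (measurePreserving_prodAssoc ν μ ρ).comp <|
        (Measure.measurePreserving_swap.prod (MeasurePreserving.id ρ)).comp <|
          (measurePreserving_prodAssoc μ ν ρ).symm _).comp <|
    measurePreserving_prodAssoc κ μ (ν.prod ρ)

lemma jointExceedance_comm (μ ν : Measure ℝ) [SFinite μ] [SFinite ν] (K x : ℝ) :
    jointExceedance μ ν K x = jointExceedance ν μ K x := by
  rw [jointExceedance, ← Measure.measurePreserving_swap.measure_preimage
    (measurableSet_jointExceedance K x).nullMeasurableSet]
  congr 1
  ext p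
  simp only [mem_preimage, mem_ofPred_eq, Prod.fst_swap, Prod.snd_swap, add_comm]
  tauto

variable {G F : Measure ℝ}

lemma jointExceedance_map_mul [SFinite F] (K x s t : ℝ) :
    jointExceedance (F.map (s * ·)) (F.map (t * ·)) K x =
      (F.prod F) {q | K < s * q.1 ∧ K < t * q.2 ∧ x < s * q.1 + t * q.2} := by
  have hs : Measurable (s * ·) := measurable_const_mul s
  have ht : Measurable (t * ·) := measurable_const_mul t
  rw [jointExceedance, Measure.map_prod_map _ _ hs ht,
    Measure.map_apply (hs.prodMap ht) (measurableSet_jointExceedance K x)]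
  rfl

lemma jointExceedance_mconv [SFinite G] [SFinite F] (K x : ℝ) :
    jointExceedance (G ∗ₘ F) (G ∗ₘ F) K x =
      ∫⁻ p, jointExceedance (F.map (p.1 * ·)) (F.map (p.2 * ·)) K x ∂(G.prod G) := by
  have hmul : Measurable fun p : ℝ × ℝ => p.1 * p.2 := measurable_mul
  have hmeas := (hmul.prodMap hmul) (measurableSet_jointExceedance K x)
  rw [jointExceedance, Measure.mconv, Measure.map_prod_map _ _ hmul hmul,
    Measure.map_apply (hmul.prodMap hmul) (measurableSet_jointExceedance K x),
    ← (measurePreserving_prodProdProdComm G G F F).measure_preimage hmeas.nullMeasurableSet,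
    Measure.prod_apply ((measurePreserving_prodProdProdComm G G F F).measurable hmeas)]
  simp_rw [jointExceedance_map_mul]
  rfl

lemma jointExceedance_cases {L s t t₁ t₂ x y₁ y₂ : ℝ} (ht : 0 < t) (hts : t ≤ s) (hL : 0 < L)
    (ht₂ : 0 < t₂) (ht₂₁ : t₂ ≤ t₁) (hx : 2 * L ≤ x / s) (h₁ : t₁ * L < s * y₁)
    (h₂ : t₁ * L < t * y₂) (hsum : x < s * y₁ + t * y₂) :
    (L < y₁ ∧ L < y₂ ∧ x / s < y₁ + y₂) ∨ (t₂ < t ∧ x / s - L < y₁) ∨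
      (t₂ < t ∧ x / s - L < y₂) ∨ (t₁ < s ∧ x / (2 * t₂) < y₂) := by
  have hs : 0 < s := ht.trans_le hts
  have hxs : 2 * L * s ≤ x := (le_div_iff₀ hs).1 hx
  rcases le_or_gt y₂ L with hy₂ | hy₂
  · have ht₁t : t₁ < t := by
      by_contra! h
      nlinarith
    refine .inr (.inl ⟨ht₂₁.trans_lt ht₁t, ?_⟩)
    rw [sub_lt_iff_lt_add, div_lt_iff₀' hs]
    nlinarith
  rcases le_or_gt y₁ L with hy₁ | hy₁
  · have hy₂x : x - s * L < t * y₂ := by nlinarith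
    rcases le_or_gt t t₂ with htt₂ | htt₂
    · refine .inr (.inr (.inr ⟨?_, ?_⟩))
      · by_contra! h
        nlinarith
      · rw [div_lt_iff₀ (by positivity)]
        nlinarith
    · refine .inr (.inr (.inl ⟨htt₂, ?_⟩))
      rw [sub_lt_iff_lt_add, div_lt_iff₀' hs]
      nlinarith
  · refine .inl ⟨hy₁, hy₂, ?_⟩
    rw [div_lt_iff₀' hs]
    nlinarith

lemma measure_prod_lt_fst_le [IsProbabilityMeasure F] (a t c : ℝ) :
    (F.prod F) {q | a < t ∧ c < q.1} ≤ (Ioi a).indicator 1 t * tail F c := by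
  by_cases h : a < t
  · rw [indicator_of_mem (mem_Ioi.2 h), Pi.one_apply, one_mul]
    calc (F.prod F) {q | a < t ∧ c < q.1} ≤ (F.prod F) (Ioi c ×ˢ univ) :=
          measure_mono fun q hq => ⟨hq.2, mem_univ _⟩
      _ = tail F c := by rw [Measure.prod_prod, measure_univ, mul_one]
  · simp [h]

lemma measure_prod_lt_snd_le [IsProbabilityMeasure F] (a t c : ℝ) :
    (F.prod F) {q | a < t ∧ c < q.2} ≤ (Ioi a).indicator 1 t * tail F c := by
  by_cases h : a < t
  · rw [indicator_of_mem (mem_Ioi.2 h), Pi.one_apply, one_mul]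
    calc (F.prod F) {q | a < t ∧ c < q.2} ≤ (F.prod F) (univ ×ˢ Ioi c) :=
          measure_mono fun q hq => ⟨mem_univ _, hq.2⟩
      _ = tail F c := by rw [Measure.prod_prod, measure_univ, one_mul]
  · simp [h]

lemma jointExceedance_map_mul_le [IsProbabilityMeasure F] {L s t t₁ t₂ x : ℝ} (ht : 0 < t)
    (hts : t ≤ s) (hL : 0 < L) (ht₂ : 0 < t₂) (ht₂₁ : t₂ ≤ t₁) (hx : 2 * L ≤ x / s) :
    jointExceedance (F.map (s * ·)) (F.map (t * ·)) (t₁ * L) x ≤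
      jointExceedance F F L (x / s) + (Ioi t₂).indicator 1 t * tail F (x / s - L) +
        (Ioi t₂).indicator 1 t * tail F (x / s - L) +
          (Ioi t₁).indicator 1 s * tail F (x / (2 * t₂)) := by
  rw [jointExceedance_map_mul]
  calc (F.prod F) {q | t₁ * L < s * q.1 ∧ t₁ * L < t * q.2 ∧ x < s * q.1 + t * q.2}
      ≤ (F.prod F) ((({q | L < q.1 ∧ L < q.2 ∧ x / s < q.1 + q.2} ∪
          {q | t₂ < t ∧ x / s - L < q.1}) ∪ {q | t₂ < t ∧ x / s - L < q.2}) ∪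
            {q | t₁ < s ∧ x / (2 * t₂) < q.2}) := by
        refine measure_mono fun q hq => ?_
        rcases jointExceedance_cases ht hts hL ht₂ ht₂₁ hx hq.1 hq.2.1 hq.2.2 with h | h | h | h
        exacts [.inl (.inl (.inl h)), .inl (.inl (.inr h)), .inl (.inr h), .inr h]
    _ ≤ _ := (measure_union_le _ _).trans <| add_le_add ((measure_union_le _ _).trans <|
        add_le_add ((measure_union_le _ _).trans <| add_le_add le_rfl
          (measure_prod_lt_fst_le _ _ _)) (measure_prod_lt_snd_le _ _ _))
            (measure_prod_lt_snd_le _ _ _)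

/-- A bound for the joint exceedance of `s Y₁` and `t Y₂`, where `p = (s, t)` and `t ≤ s`. The four
terms stand for `s` being comparable to `x`, for both `Y₁` and `Y₂` being large, for one of them
being bounded while `t > t₂`, and for `Y₁` being bounded while `t ≤ t₂`. -/
noncomputable def jointMajorant (F : Measure ℝ) (ε : ℝ≥0∞) (t₁ t₂ z₁ x : ℝ) (p : ℝ × ℝ) : ℝ≥0∞ :=
  (Ioi (z₁⁻¹ * x)).indicator 1 p.1 + ε * tail F (x / p.1) +
    4 * (tail F (x / p.1) * (Ioi t₂).indicator 1 p.2) +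
      (Ioi t₁).indicator 1 p.1 * tail F (x / (2 * t₂))

lemma jointExceedance_map_mul_le_jointMajorant [IsProbabilityMeasure F] {ε : ℝ≥0∞}
    {L s t t₁ t₂ z₁ x : ℝ} (ht : 0 < t) (hts : t ≤ s) (hL : 0 < L) (ht₂ : 0 < t₂)
    (ht₂₁ : t₂ ≤ t₁) (hLz₁ : 2 * L ≤ z₁)
    (hJ : ∀ z, z₁ ≤ z → jointExceedance F F L z ≤ ε * tail F z)
    (hshift : ∀ z, z₁ ≤ z → tail F (z - L) ≤ 2 * tail F z) :
    jointExceedance (F.map (s * ·)) (F.map (t * ·)) (t₁ * L) x ≤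
      jointMajorant F ε t₁ t₂ z₁ x (s, t) := by
  have hs : 0 < s := ht.trans_le hts
  rcases lt_or_ge (x / s) z₁ with hxs | hxs
  · have hsx : s ∈ Ioi (z₁⁻¹ * x) := by
      rw [mem_Ioi, inv_mul_lt_iff₀ (by linarith)]
      exact (div_lt_iff₀ hs).1 hxs
    rw [jointExceedance_map_mul, jointMajorant, indicator_of_mem hsx, add_assoc, add_assoc]
    exact prob_le_one.trans le_self_add
  · have hone := hshift _ hxs
    calc jointExceedance (F.map (s * ·)) (F.map (t * ·)) (t₁ * L) x
        ≤ jointExceedance F F L (x / s) + (Ioi t₂).indicator 1 t * tail F (x / s - L) +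
            (Ioi t₂).indicator 1 t * tail F (x / s - L) +
              (Ioi t₁).indicator 1 s * tail F (x / (2 * t₂)) :=
          jointExceedance_map_mul_le ht hts hL ht₂ ht₂₁ (hLz₁.trans hxs)
      _ ≤ ε * tail F (x / s) + (Ioi t₂).indicator 1 t * (2 * tail F (x / s)) +
            (Ioi t₂).indicator 1 t * (2 * tail F (x / s)) +
              (Ioi t₁).indicator 1 s * tail F (x / (2 * t₂)) := by
          gcongr
          exact hJ _ hxs
      _ = ε * tail F (x / s) + 4 * (tail F (x / s) * (Ioi t₂).indicator 1 t) +
            (Ioi t₁).indicator 1 s * tail F (x / (2 * t₂)) := by ring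
      _ ≤ jointMajorant F ε t₁ t₂ z₁ x (s, t) := by
          rw [jointMajorant]
          gcongr
          exact le_add_self

lemma measurable_jointMajorant {ε : ℝ≥0∞} {t₁ t₂ z₁ x : ℝ} :
    Measurable (jointMajorant F ε t₁ t₂ z₁ x) := by
  have htail : Measurable fun p : ℝ × ℝ => tail F (x / p.1) :=
    (measurable_tail F).comp (by fun_prop)
  have hind (a : ℝ) : Measurable ((Ioi a).indicator (1 : ℝ → ℝ≥0∞)) :=
    measurable_one.indicator measurableSet_Ioi
  exact ((((hind _).comp measurable_fst).add (htail.const_mul ε)).add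
    ((htail.mul ((hind _).comp measurable_snd)).const_mul 4)).add
      (((hind _).comp measurable_fst).mul_const _)

lemma lintegral_jointMajorant [IsFiniteMeasure G] [SFinite F] (hG : ∀ᵐ t ∂G, 0 < t) {ε : ℝ≥0∞}
    {t₁ t₂ z₁ x : ℝ} :
    ∫⁻ p, jointMajorant F ε t₁ t₂ z₁ x p ∂(G.prod G) =
      tail G (z₁⁻¹ * x) * G univ + ε * (tail (G ∗ₘ F) x * G univ) +
        4 * (tail (G ∗ₘ F) x * tail G t₂) + tail G t₁ * G univ * tail F (x / (2 * t₂)) := by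
  have htail : Measurable fun t : ℝ => tail F (x / t) := (measurable_tail F).comp (by fun_prop)
  have hind (a : ℝ) : Measurable ((Ioi a).indicator (1 : ℝ → ℝ≥0∞)) :=
    measurable_one.indicator measurableSet_Ioi
  have htail₁ : Measurable fun p : ℝ × ℝ => tail F (x / p.1) := htail.comp measurable_fst
  have hind₁ (a : ℝ) : Measurable fun p : ℝ × ℝ => (Ioi a).indicator (1 : ℝ → ℝ≥0∞) p.1 :=
    (hind a).comp measurable_fst
  have hind₂ (a : ℝ) : Measurable fun p : ℝ × ℝ => (Ioi a).indicator (1 : ℝ → ℝ≥0∞) p.2 :=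
    (hind a).comp measurable_snd
  have htail₁₂ : Measurable fun p : ℝ × ℝ =>
      tail F (x / p.1) * (Ioi t₂).indicator (1 : ℝ → ℝ≥0∞) p.2 := htail₁.mul (hind₂ _)
  have hfst {f : ℝ → ℝ≥0∞} (hf : Measurable f) :
      ∫⁻ p, f p.1 ∂(G.prod G) = (∫⁻ t, f t ∂G) * G univ := by
    simpa using lintegral_prod_mul (μ := G) (ν := G) hf.aemeasurable
      (aemeasurable_const (b := (1 : ℝ≥0∞)))
  simp only [jointMajorant]
  rw [lintegral_add_right _ ((hind₁ _).mul_const _),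
    lintegral_add_right _ (htail₁₂.const_mul 4),
    lintegral_add_right _ (htail₁.const_mul ε), lintegral_mul_const _ (hind₁ _),
    lintegral_const_mul _ htail₁, lintegral_const_mul _ htail₁₂,
    lintegral_prod_mul htail.aemeasurable (hind _).aemeasurable, hfst (hind _), hfst (hind _),
    hfst htail, ← tail_mconv hG, lintegral_indicator_one measurableSet_Ioi,
    lintegral_indicator_one measurableSet_Ioi, lintegral_indicator_one measurableSet_Ioi]

lemma lintegral_prod_le_two_mul [SFinite G] {φ ψ : ℝ × ℝ → ℝ≥0∞} (hG : ∀ᵐ t ∂G, 0 < t)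
    (hψ : Measurable ψ) (hsymm : ∀ p, φ p.swap = φ p)
    (hle : ∀ s t, 0 < t → t ≤ s → φ (s, t) ≤ ψ (s, t)) :
    ∫⁻ p, φ p ∂(G.prod G) ≤ 2 * ∫⁻ p, ψ p ∂(G.prod G) := by
  have hbound : ∀ᵐ p ∂(G.prod G), φ p ≤ ψ p + ψ p.swap := by
    filter_upwards [Measure.quasiMeasurePreserving_fst.ae hG,
      Measure.quasiMeasurePreserving_snd.ae hG] with p hs ht
    rcases le_total p.2 p.1 with h | h
    · exact (hle p.1 p.2 ht h).trans le_self_add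
    · exact (hsymm p).ge.trans ((hle p.2 p.1 hs h).trans le_add_self)
  calc ∫⁻ p, φ p ∂(G.prod G) ≤ ∫⁻ p, ψ p + ψ p.swap ∂(G.prod G) := lintegral_mono_ae hbound
    _ = 2 * ∫⁻ p, ψ p ∂(G.prod G) := by
      rw [lintegral_add_left hψ, lintegral_prod_swap, two_mul]

lemma exists_tail_mul_le [IsFiniteMeasure G] {η : ℝ≥0∞} (hη : η ≠ 0) (t₂ : ℝ) :
    ∃ t₁, t₂ ≤ t₁ ∧ tail G t₁ * G univ ≤ η * G (Ici (2 * t₂)) := by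
  by_cases h : G (Ici (2 * t₂)) = 0
  · refine ⟨max t₂ (2 * t₂), le_max_left _ _, ?_⟩
    have htail : tail G (max t₂ (2 * t₂)) = 0 :=
      measure_mono_null (fun y hy => (le_max_right _ _).trans (mem_Ioi.1 hy).le) h
    simp [htail]
  · have hlim : Tendsto (fun t => tail G t * G univ) atTop (𝓝 0) := by
      simpa using ENNReal.Tendsto.mul_const (tendsto_tail_atTop G) (.inr (measure_ne_top G univ))
    obtain ⟨t₁, ht₁, ht₂₁⟩ := ((hlim.eventually_lt_const
      (pos_iff_ne_zero.2 (mul_ne_zero hη h))).and (eventually_ge_atTop t₂)).exists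
    exact ⟨t₁, ht₂₁, ht₁.le⟩

lemma NegligibleJointExceedance.of_forall_mul {ν : Measure ℝ} {C : ℝ≥0∞} (hC : C ≠ ⊤)
    (h : ∀ η : ℝ≥0∞, η ≠ 0 → η ≠ ⊤ →
      ∃ K, AsymptoticLE (C * η) (jointExceedance ν ν K) (tail ν)) :
    NegligibleJointExceedance ν := by
  intro ε hε
  obtain ⟨η, hη0, hη⟩ := exists_between (ENNReal.div_pos hε hC)
  obtain ⟨K, hK⟩ := h η hη0.ne' hη.ne_top
  exact ⟨K, hK.mono ((mul_le_mul_right hη.le C).trans ENNReal.mul_div_le)⟩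

lemma NegligibleJointExceedance.exists_forall_le
    (hF : NegligibleJointExceedance F) (hFL : LongTailed F) {η : ℝ≥0∞} (hη : η ≠ 0) :
    ∃ L z₁ : ℝ, 0 < L ∧ 2 * L ≤ z₁ ∧
      (∀ z, z₁ ≤ z → jointExceedance F F L z ≤ η * tail F z) ∧
        ∀ z, z₁ ≤ z → tail F (z - L) ≤ 2 * tail F z := by
  obtain ⟨δ, hδ0, hδη⟩ := exists_between (pos_iff_ne_zero.2 hη)
  obtain ⟨K, hK⟩ := hF δ hδ0.ne'
  have hL : 0 < max K 1 := by positivity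
  obtain ⟨z₁, hz₁⟩ := eventually_atTop.1
    ((hK η hδη).and (hFL _ hL 2 ENNReal.one_lt_two))
  refine ⟨max K 1, max z₁ (2 * max K 1), hL, le_max_right _ _, fun z hz => ?_, fun z hz =>
    (hz₁ z ((le_max_left _ _).trans hz)).2⟩
  exact (jointExceedance_antitone F F z (le_max_left K 1)).trans
    (hz₁ z ((le_max_left _ _).trans hz)).1

lemma NegligibleJointExceedance.mconv [IsFiniteMeasure G] [IsProbabilityMeasure F]
    (hF : NegligibleJointExceedance F) (hFL : LongTailed F) (hG : ∀ᵐ t ∂G, 0 < t)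
    (hneg : TailNegligible G (G ∗ₘ F)) : NegligibleJointExceedance (G ∗ₘ F) := by
  refine .of_forall_mul (C := 2 * (2 * G univ + 5)) (by finiteness) fun η hη _ => ?_
  obtain ⟨L, z₁, hL, hLz₁, hJ, hshift⟩ := hF.exists_forall_le hFL hη
  obtain ⟨t₂, hGt₂, ht₂⟩ := (((tendsto_tail_atTop G).eventually_lt_const
    (pos_iff_ne_zero.2 hη)).and (eventually_gt_atTop 0)).exists
  obtain ⟨t₁, ht₂₁, hGt₁⟩ := exists_tail_mul_le (G := G) hη t₂
  refine ⟨t₁ * L, .of_eventually_le ?_⟩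
  filter_upwards [hneg z₁⁻¹ (inv_pos.2 (by linarith)) η (pos_iff_ne_zero.2 hη),
    eventually_ge_atTop 0] with x hx hx0
  have hlow := measure_Ici_mul_tail_le_tail_mconv (F := F) hG (by positivity : 0 < 2 * t₂) hx0
  rw [jointExceedance_mconv]
  calc _ ≤ 2 * ∫⁻ p, jointMajorant F η t₁ t₂ z₁ x p ∂(G.prod G) :=
        lintegral_prod_le_two_mul hG measurable_jointMajorant
          (fun _ => jointExceedance_comm _ _ _ _) fun _ _ ht hts =>
            jointExceedance_map_mul_le_jointMajorant ht hts hL ht₂ ht₂₁ hLz₁ hJ hshift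
    _ ≤ 2 * (η * tail (G ∗ₘ F) x * G univ + η * (tail (G ∗ₘ F) x * G univ) +
          4 * (tail (G ∗ₘ F) x * η) + η * G (Ici (2 * t₂)) * tail F (x / (2 * t₂))) := by
        rw [lintegral_jointMajorant hG]
        gcongr
    _ ≤ 2 * (η * tail (G ∗ₘ F) x * G univ + η * (tail (G ∗ₘ F) x * G univ) +
          4 * (tail (G ∗ₘ F) x * η) + η * tail (G ∗ₘ F) x) := by
        rw [mul_assoc η (G (Ici (2 * t₂)))]
        gcongr
    _ = 2 * (2 * G univ + 5) * η * tail (G ∗ₘ F) x := by ring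

end JointExceedance

section Inheritance

/-- Asymptotic equivalence of the tails: their quotient tends to `1`. -/
structure TailEquivalent (ν ν' : Measure ℝ) : Prop where
  le : AsymptoticLE 1 (tail ν) (tail ν')
  ge : AsymptoticLE 1 (tail ν') (tail ν)

/-- Each of the classes from which the ten classes of the theorem are built as intersections passes
from `F` to `H`. -/
structure InheritsTailClasses (F H : Measure ℝ) : Prop where
  memC : MemC F → MemC H
  memD : MemD F → MemD H
  memS : MemS F → MemS H
  memL : MemL F → MemL H
  memPD : MemPD F → MemPD H

variable {ν ν' : Measure ℝ}

lemma TailEquivalent.asymptoticLE_comp (h : TailEquivalent ν ν') {φ : ℝ → ℝ}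
    (hφ : Tendsto φ atTop atTop) {c : ℝ≥0∞} (hc : c ≠ ⊤)
    (hν' : AsymptoticLE c (fun x => tail ν' (φ x)) (tail ν')) :
    AsymptoticLE c (fun x => tail ν (φ x)) (tail ν) := by
  simpa using ((h.le.comp_tendsto hφ).trans hν' ENNReal.one_ne_top hc).trans h.ge
    (by simpa using hc) ENNReal.one_ne_top

lemma TailEquivalent.longTailed (h : TailEquivalent ν ν') (hν' : LongTailed ν') : LongTailed ν :=
  fun a ha => h.asymptoticLE_comp (tendsto_atTop_add_const_right _ (-a) tendsto_id)
    ENNReal.one_ne_top (hν' a ha)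

lemma jointExceedance_le_mul_right {μ : Measure ℝ} [SFinite ν] [SFinite ν'] {c : ℝ≥0∞}
    {K x : ℝ} (h : ∀ y, K ≤ y → tail ν y ≤ c * tail ν' y) :
    jointExceedance μ ν K x ≤ c * jointExceedance μ ν' K x := by
  have hmeas := measurableSet_jointExceedance K x
  rw [jointExceedance, jointExceedance, Measure.prod_apply hmeas, Measure.prod_apply hmeas,
    ← lintegral_const_mul _ (measurable_measure_prodMk_left hmeas)]
  refine lintegral_mono fun s => ?_
  by_cases hs : K < s
  · have hslice : Prod.mk s ⁻¹' {p : ℝ × ℝ | K < p.1 ∧ K < p.2 ∧ x < p.1 + p.2} =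
        Ioi (max K (x - s)) := by
      ext y
      simp [hs, sub_lt_iff_lt_add']
    simpa only [hslice] using h _ (le_max_left _ _)
  · simp [hs]

lemma TailEquivalent.negligibleJointExceedance [SFinite ν] [SFinite ν']
    (h : TailEquivalent ν ν') (hν' : NegligibleJointExceedance ν') :
    NegligibleJointExceedance ν := by
  refine .of_forall_mul (C := 2 * 2) (by finiteness) fun η hη hηtop => ?_
  obtain ⟨K₀, hK₀⟩ := hν' η hη
  obtain ⟨K₁, hK₁⟩ := eventually_atTop.1 (h.le 2 ENNReal.one_lt_two)
  have hle (μ : Measure ℝ) (x : ℝ) :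
      jointExceedance μ ν (max K₀ K₁) x ≤ 2 * jointExceedance μ ν' (max K₀ K₁) x :=
    jointExceedance_le_mul_right fun y hy => hK₁ y ((le_max_right _ _).trans hy)
  have hbound (x : ℝ) :
      jointExceedance ν ν (max K₀ K₁) x ≤ 2 * 2 * jointExceedance ν' ν' K₀ x :=
    calc jointExceedance ν ν (max K₀ K₁) x
        ≤ 2 * jointExceedance ν' ν (max K₀ K₁) x := by
          rw [jointExceedance_comm ν']
          exact hle ν x
      _ ≤ 2 * (2 * jointExceedance ν' ν' (max K₀ K₁) x) := by
          gcongr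
          exact hle ν' x
      _ ≤ 2 * 2 * jointExceedance ν' ν' K₀ x := by
          rw [mul_assoc]
          gcongr
          exact jointExceedance_antitone ν' ν' x (le_max_left K₀ K₁)
  refine ⟨max K₀ K₁, ?_⟩
  simpa using ((AsymptoticLE.of_eventually_le (.of_forall hbound)).trans hK₀ (by finiteness)
    hηtop).trans h.ge (by finiteness) ENNReal.one_ne_top

variable {F G H : Measure ℝ}

lemma TailEquivalent.ne_zero_of_mconv (h : TailEquivalent H (G ∗ₘ F))
    (hH : ∀ x, tail H x ≠ 0) : G ≠ 0 := by
  rintro rfl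
  obtain ⟨x, hx⟩ := (h.le 2 ENNReal.one_lt_two).exists
  exact hH x (by simpa [tail] using hx)

theorem InheritsTailClasses.of_tailEquivalent_mconv [IsProbabilityMeasure F] [IsFiniteMeasure G]
    [IsProbabilityMeasure H] (hF0 : ∀ᵐ y ∂F, 0 ≤ y) (hH0 : ∀ᵐ y ∂H, 0 ≤ y)
    (hF : ∀ x, tail F x ≠ 0) (hH : ∀ x, tail H x ≠ 0) (hG : ∀ᵐ t ∂G, 0 < t)
    (hneg : TailNegligible G (G ∗ₘ F)) (h : TailEquivalent H (G ∗ₘ F)) :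
    InheritsTailClasses F H := by
  have hscale {b : ℝ} {c : ℝ≥0∞} (hb : 0 < b) (hc : c ≠ ⊤)
      (hFb : AsymptoticLE c (fun z => tail F (b * z)) (tail F)) :
      AsymptoticLE c (fun x => tail H (b * x)) (tail H) :=
    h.asymptoticLE_comp (tendsto_id.const_mul_atTop hb) hc (asymptoticLE_tail_mconv_mul hG hneg hFb)
  have hlong (hFL : LongTailed F) : LongTailed H :=
    h.longTailed (hFL.mconv hG (h.ne_zero_of_mconv hH) hneg)
  constructor
  · rw [memC_iff_consistentlyVarying hF, memC_iff_consistentlyVarying hH]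
    refine fun hC r hr => ?_
    obtain ⟨u, h1u, hur⟩ := exists_between hr
    obtain ⟨b, hb0, hb1, hb⟩ := hC u h1u
    exact ⟨b, hb0, hb1, (hscale hb0 hur.ne_top hb).mono hur.le⟩
  · rw [memD_iff hF, memD_iff hH]
    intro hD y hy0 hy1
    obtain ⟨C, hC, hy⟩ := hD y hy0 hy1
    exact ⟨C, hC, hscale hy0 hC hy⟩
  · rw [memS_iff hF0 hF, memS_iff hH0 hH]
    exact fun ⟨hFL, hFJ⟩ => ⟨hlong hFL, h.negligibleJointExceedance (hFJ.mconv hFL hG hneg)⟩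
  · rw [memL_iff_longTailed hF, memL_iff_longTailed hH]
    exact hlong
  · rw [memPD_iff hF, memPD_iff hH]
    intro hPD b hb
    obtain ⟨c, hc, hbc⟩ := hPD b hb
    exact ⟨c, hc, hscale (one_pos.trans hb) hc.ne_top hbc⟩

end Inheritance

section ConditionalMixture

lemma tail_ne_zero_of_eventually {ν : Measure ℝ} (h : ∀ᶠ x in atTop, tail ν x ≠ 0) (x : ℝ) :
    tail ν x ≠ 0 := by
  obtain ⟨y, hy, hxy⟩ := (h.and (eventually_ge_atTop x)).exists
  exact fun hx => hy (measure_mono_null (Ioi_subset_Ioi hxy) hx)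

/-- The tail of `κ t` is asymptotically `h t` times that of `F`, uniformly in `t ∈ S`. For the
conditional laws `κ t` of `Y_A` given `Θ = t` and the support `S` of `Θ` this is Assumption
`CDA`. -/
def UniformTailEquivalent (κ : Kernel ℝ ℝ) (F : Measure ℝ) (h : ℝ → ℝ) (S : Set ℝ) : Prop :=
  ∀ ε : ℝ, 0 < ε → ∀ᶠ x in atTop, ∀ t ∈ S, |mTail (κ t) x / (h t * mTail F x) - 1| ≤ ε

namespace UniformTailEquivalent

variable {κ : Kernel ℝ ℝ} {F : Measure ℝ} {h : ℝ → ℝ} {S : Set ℝ}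

lemma eventually_div_pos (hκ : UniformTailEquivalent κ F h S) :
    ∀ᶠ x in atTop, ∀ t ∈ S, 0 < mTail (κ t) x / (h t * mTail F x) := by
  filter_upwards [hκ (1 / 2) (by norm_num)] with x hx t ht
  linarith [(abs_le.1 (hx t ht)).1]

lemma tail_ne_zero (hκ : UniformTailEquivalent κ F h S) (hS : S.Nonempty) (x : ℝ) :
    tail F x ≠ 0 := by
  obtain ⟨t, ht⟩ := hS
  refine tail_ne_zero_of_eventually (hκ.eventually_div_pos.mono fun y hy h0 => ?_) x
  simpa [mTail, h0] using hy t ht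

lemma tail_apply_ne_zero (hκ : UniformTailEquivalent κ F h S) {t : ℝ} (ht : t ∈ S) (x : ℝ) :
    tail (κ t) x ≠ 0 := by
  refine tail_ne_zero_of_eventually (hκ.eventually_div_pos.mono fun y hy h0 => ?_) x
  simpa [mTail, h0] using hy t ht

lemma pos (hκ : UniformTailEquivalent κ F h S) {t : ℝ} (ht : t ∈ S) : 0 < h t := by
  obtain ⟨x, hx⟩ := hκ.eventually_div_pos.exists
  by_contra! h0
  exact (hx t ht).not_ge (div_nonpos_of_nonneg_of_nonpos ENNReal.toReal_nonneg
    (mul_nonpos_of_nonpos_of_nonneg h0 ENNReal.toReal_nonneg))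

variable [IsFiniteMeasure F]

lemma ofReal_mul_mTail (hκ : UniformTailEquivalent κ F h S) {t : ℝ} (ht : t ∈ S) (x : ℝ) :
    ENNReal.ofReal (h t * mTail F x) = ENNReal.ofReal (h t) * tail F x := by
  rw [ENNReal.ofReal_mul (hκ.pos ht).le, ofReal_mTail]

variable [IsMarkovKernel κ]

lemma eventually_tail_le (hκ : UniformTailEquivalent κ F h S) {s : ℝ≥0∞} (hs : 1 < s) :
    ∀ᶠ x in atTop, ∀ t ∈ S, tail (κ t) x ≤ s * (ENNReal.ofReal (h t) * tail F x) := by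
  obtain ⟨u, hu0, h1u, hus⟩ := ENNReal.lt_iff_exists_real_btwn.1 hs
  filter_upwards [hκ (u - 1) (sub_pos.2 (ENNReal.one_lt_ofReal.1 h1u))] with x hx t ht
  have hF := mTail_pos (hκ.tail_ne_zero ⟨t, ht⟩) x
  have hle : mTail (κ t) x ≤ u * (h t * mTail F x) := by
    rw [← div_le_iff₀ (mul_pos (hκ.pos ht) hF)]
    linarith [(abs_le.1 (hx t ht)).2]
  calc tail (κ t) x = ENNReal.ofReal (mTail (κ t) x) := (ofReal_mTail x).symm
    _ ≤ ENNReal.ofReal u * (ENNReal.ofReal (h t) * tail F x) := by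
        rw [← hκ.ofReal_mul_mTail ht, ← ENNReal.ofReal_mul hu0]
        exact ENNReal.ofReal_le_ofReal hle
    _ ≤ s * (ENNReal.ofReal (h t) * tail F x) := by gcongr

lemma eventually_le_tail (hκ : UniformTailEquivalent κ F h S) {s : ℝ≥0∞} (hs : 1 < s) :
    ∀ᶠ x in atTop, ∀ t ∈ S, ENNReal.ofReal (h t) * tail F x ≤ s * tail (κ t) x := by
  obtain ⟨u, hu0, h1u, hus⟩ := ENNReal.lt_iff_exists_real_btwn.1 hs
  have hu : 1 < u := ENNReal.one_lt_ofReal.1 h1u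
  filter_upwards [hκ (1 - u⁻¹) (sub_pos.2 (inv_lt_one_of_one_lt₀ hu))] with x hx t ht
  have hF := mTail_pos (hκ.tail_ne_zero ⟨t, ht⟩) x
  have hle : h t * mTail F x ≤ u * mTail (κ t) x := by
    rw [← inv_mul_le_iff₀ (one_pos.trans hu), ← le_div_iff₀ (mul_pos (hκ.pos ht) hF)]
    linarith [(abs_le.1 (hx t ht)).1]
  calc ENNReal.ofReal (h t) * tail F x = ENNReal.ofReal (h t * mTail F x) :=
        (hκ.ofReal_mul_mTail ht x).symm
    _ ≤ ENNReal.ofReal u * tail (κ t) x := by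
        rw [← ofReal_mTail (ν := κ t), ← ENNReal.ofReal_mul hu0]
        exact ENNReal.ofReal_le_ofReal hle
    _ ≤ s * tail (κ t) x := by gcongr

lemma exists_forall_ofReal_le (hκ : UniformTailEquivalent κ F h S) :
    ∃ C : ℝ≥0, ∀ t ∈ S, ENNReal.ofReal (h t) ≤ C := by
  rcases S.eq_empty_or_nonempty with rfl | hS
  · simp
  obtain ⟨x, hx⟩ := (hκ.eventually_le_tail ENNReal.one_lt_two).exists
  have hFx := hκ.tail_ne_zero hS x
  lift 2 / tail F x to ℝ≥0 using ENNReal.div_ne_top (by simp) hFx with C hC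
  refine ⟨C, fun t ht => ?_⟩
  rw [hC, ENNReal.le_div_iff_mul_le (.inl hFx) (.inl (measure_ne_top _ _))]
  exact (hx t ht).trans (mul_le_of_le_one_right' prob_le_one)

variable {μ : Measure ℝ}

lemma exists_ae_forall_tail_le (hκ : UniformTailEquivalent κ F h S) (hS : ∀ᵐ t ∂μ, t ∈ S)
    {s : ℝ≥0∞} (hs : 1 < s) :
    ∃ z₀, ∀ᵐ t ∂μ, ∀ z, z₀ ≤ z → tail (κ t) z ≤ s * (ENNReal.ofReal (h t) * tail F z) := by
  obtain ⟨z₀, hz₀⟩ := eventually_atTop.1 (hκ.eventually_tail_le hs)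
  exact ⟨z₀, hS.mono fun t ht z hz => hz₀ z hz t ht⟩

lemma exists_ae_forall_le_tail (hκ : UniformTailEquivalent κ F h S) (hS : ∀ᵐ t ∂μ, t ∈ S)
    {s : ℝ≥0∞} (hs : 1 < s) :
    ∃ z₀, ∀ᵐ t ∂μ, ∀ z, z₀ ≤ z → ENNReal.ofReal (h t) * tail F z ≤ s * tail (κ t) z := by
  obtain ⟨z₀, hz₀⟩ := eventually_atTop.1 (hκ.eventually_le_tail hs)
  exact ⟨z₀, hS.mono fun t ht z hz => hz₀ z hz t ht⟩

end UniformTailEquivalent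

variable {μ F H : Measure ℝ} {κ : Kernel ℝ ℝ} {h : ℝ → ℝ} {S : Set ℝ}

/-- The law of `Θ` reweighted by the transfer function `h`: up to asymptotic equivalence of tails,
`Θ Y` is a product of independent factors once `Θ` is given this law. -/
noncomputable def transferMeasure (μ : Measure ℝ) (h : ℝ → ℝ) : Measure ℝ :=
  μ.withDensity fun t => ENNReal.ofReal (h t)

lemma transferMeasure_absolutelyContinuous : transferMeasure μ h ≪ μ :=
  withDensity_absolutelyContinuous _ _

lemma transferMeasure_le_smul {C : ℝ≥0} (hC : ∀ᵐ t ∂μ, ENNReal.ofReal (h t) ≤ C) :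
    transferMeasure μ h ≤ C • μ :=
  (withDensity_mono hC).trans_eq (withDensity_const _)

lemma tail_transferMeasure_mconv [SFinite F] (hμ : ∀ᵐ t ∂μ, 0 < t) (hh : Measurable h) (x : ℝ) :
    tail (transferMeasure μ h ∗ₘ F) x = ∫⁻ t, ENNReal.ofReal (h t) * tail F (x / t) ∂μ := by
  have htail : Measurable fun t : ℝ => tail F (x / t) := (measurable_tail F).comp (by fun_prop)
  rw [tail_mconv (transferMeasure_absolutelyContinuous.ae_le hμ), transferMeasure,
    lintegral_withDensity_eq_lintegral_mul _ hh.ennreal_ofReal htail]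
  rfl

namespace UniformTailEquivalent

variable [IsMarkovKernel κ] [IsFiniteMeasure F]

/-- Only `TailNegligible μ H` is available at this point, hence the detour through
`AsymptoticLE.of_max`, which costs a factor `2` on the right-hand side. -/
lemma asymptoticLE_tail_mixture [IsFiniteMeasure H] (hκ : UniformTailEquivalent κ F h S)
    (hμ : ∀ᵐ t ∂μ, 0 < t) (hS : ∀ᵐ t ∂μ, t ∈ S) (hh : Measurable h) (hneg : TailNegligible μ H)
    (hH : ∀ᶠ x in atTop, tail H x = ∫⁻ t, tail (κ t) (x / t) ∂μ) :
    AsymptoticLE 1 (tail H) (tail (transferMeasure μ h ∗ₘ F)) := by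
  have hhalf : AsymptoticLE 2⁻¹ (tail H) fun x => 2 * tail (transferMeasure μ h ∗ₘ F) x := by
    refine .of_max ?_ (by simp) fun x => measure_ne_top H _
    refine .mono_left (asymptoticLE_lintegral_comp_div (u := fun t => tail (κ t))
      (v := fun t z => 2 * (ENNReal.ofReal (h t) * tail F z)) hμ ENNReal.one_ne_top
      (.of_forall fun _ _ => prob_le_one) (.of_forall fun x => ?_) (fun a ha => ?_)
      fun s hs => ?_) (hH.mono fun _ => le_of_eq)
    · rw [lintegral_const_mul' _ _ (by simp), tail_transferMeasure_mconv hμ hh]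
      exact le_max_left _ _
    · refine fun s hs => (hneg a ha s hs).mono fun x hx => hx.trans ?_
      gcongr
      exact le_max_right _ _
    · simp_rw [← mul_assoc, mul_assoc (s * 2)]
      exact hκ.exists_ae_forall_tail_le hS
        ((ENNReal.div_lt_iff (.inl (by simp)) (.inl (by simp))).1 (by simpa using hs))
  have htwo : AsymptoticLE 2 (fun x => 2 * tail (transferMeasure μ h ∗ₘ F) x)
      (tail (transferMeasure μ h ∗ₘ F)) := .of_eventually_le (.of_forall fun _ => le_rfl)
  simpa [ENNReal.inv_mul_cancel] using hhalf.trans htwo (by simp) (by simp)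

lemma asymptoticLE_tail_transferMeasure_mconv (hκ : UniformTailEquivalent κ F h S)
    (hμ : ∀ᵐ t ∂μ, 0 < t) (hS : ∀ᵐ t ∂μ, t ∈ S) (hh : Measurable h) (hneg : TailNegligible μ H)
    (hH : ∀ᶠ x in atTop, tail H x = ∫⁻ t, tail (κ t) (x / t) ∂μ) :
    AsymptoticLE 1 (tail (transferMeasure μ h ∗ₘ F)) (tail H) := by
  obtain ⟨C, hC⟩ := hκ.exists_forall_ofReal_le
  refine .mono_left (asymptoticLE_lintegral_comp_div (M := C * F univ)
    (u := fun t z => ENNReal.ofReal (h t) * tail F z) (v := fun t => tail (κ t)) hμ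
    (by finiteness) (hS.mono fun t ht z => ?_) (hH.mono fun _ => ge_of_eq) hneg
    fun s hs => hκ.exists_ae_forall_le_tail hS hs)
    (.of_forall fun x => (tail_transferMeasure_mconv hμ hh x).le)
  gcongr
  · exact hC t ht
  · exact measure_mono (subset_univ _)

lemma tailEquivalent_transferMeasure_mconv [IsFiniteMeasure H] (hκ : UniformTailEquivalent κ F h S)
    (hμ : ∀ᵐ t ∂μ, 0 < t) (hS : ∀ᵐ t ∂μ, t ∈ S) (hh : Measurable h) (hneg : TailNegligible μ H)
    (hH : ∀ᶠ x in atTop, tail H x = ∫⁻ t, tail (κ t) (x / t) ∂μ) :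
    TailEquivalent H (transferMeasure μ h ∗ₘ F) :=
  ⟨hκ.asymptoticLE_tail_mixture hμ hS hh hneg hH,
    hκ.asymptoticLE_tail_transferMeasure_mconv hμ hS hh hneg hH⟩

end UniformTailEquivalent

lemma TailNegligible.transferMeasure {ν : Measure ℝ} {C : ℝ≥0} (hneg : TailNegligible μ H)
    (hC : ∀ᵐ t ∂μ, ENNReal.ofReal (h t) ≤ C) (hHν : AsymptoticLE 1 (tail H) (tail ν)) :
    TailNegligible (transferMeasure μ h) ν := by
  intro c hc
  have hle (x : ℝ) : tail (Paper.transferMeasure μ h) (c * x) ≤ C * tail μ (c * x) :=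
    transferMeasure_le_smul hC _
  simpa using ((AsymptoticLE.of_eventually_le (.of_forall hle)).trans (hneg c hc) (by simp)
    (by simp)).trans hHν (by simp) (by simp)

/-- The law of `Θ Y` when `Θ` has law `μ` and `Y` has the conditional law `κ t` given `Θ = t`. -/
noncomputable def productLaw (μ : Measure ℝ) (κ : Kernel ℝ ℝ) : Measure ℝ :=
  (μ ⊗ₘ κ).map fun p => p.1 * p.2

lemma tail_productLaw [SFinite μ] [IsSFiniteKernel κ] (hμ : ∀ᵐ t ∂μ, 0 ≤ t) {x : ℝ} (hx : 0 ≤ x) :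
    tail (productLaw μ κ) x = ∫⁻ t in Ioi 0, tail (κ t) (x / t) ∂μ := by
  have hmul : Measurable fun p : ℝ × ℝ => p.1 * p.2 := measurable_mul
  rw [tail, productLaw, Measure.map_apply hmul measurableSet_Ioi,
    Measure.compProd_apply (hmul measurableSet_Ioi), ← lintegral_indicator measurableSet_Ioi]
  refine lintegral_congr_ae (hμ.mono fun t ht => ?_)
  rcases ht.eq_or_lt with rfl | ht
  · simp [preimage, hx.not_gt]
  · rw [indicator_of_mem (mem_Ioi.2 ht)]
    exact congrArg (κ t) (Set.ext fun y => (div_lt_iff₀' ht).symm)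

lemma UniformTailEquivalent.tail_productLaw_ne_zero [SFinite μ] [IsSFiniteKernel κ]
    (hκ : UniformTailEquivalent κ F h S) (hμ : ∀ᵐ t ∂μ, 0 ≤ t) (hμ0 : μ (Ioi 0) ≠ 0)
    (hS : ∀ᵐ t ∂μ, t ∈ S) (x : ℝ) : tail (productLaw μ κ) x ≠ 0 := by
  refine tail_ne_zero_of_eventually ((eventually_ge_atTop 0).mono fun y hy h0 => ?_) x
  have hmeas : Measurable fun t => tail (κ t) (y / t) :=
    Kernel.measurable_kernel_prodMk_left (t := {p : ℝ × ℝ | y / p.1 < p.2})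
      (measurableSet_lt (by fun_prop) (by fun_prop))
  rw [tail_productLaw hμ hy, lintegral_eq_zero_iff hmeas] at h0
  have hfalse : ∀ᵐ _ ∂μ.restrict (Ioi 0), False := by
    filter_upwards [h0, ae_restrict_of_ae hS] with t ht htS
      using hκ.tail_apply_ne_zero htS _ ht
  rw [eventually_false_iff_eq_bot, ae_eq_bot, Measure.restrict_eq_zero] at hfalse
  exact hμ0 hfalse

lemma tailNegligible_of_tendsto [IsFiniteMeasure μ] [IsFiniteMeasure H]
    (hH : ∀ x, tail H x ≠ 0)
    (h : ∀ c, 0 < c → Tendsto (fun x => mTail μ (c * x) / mTail H x) atTop (𝓝 0)) :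
    TailNegligible μ H := by
  intro c hc
  rw [← ENNReal.ofReal_zero, asymptoticLE_tail_iff hH le_rfl]
  exact fun s hs => (h c hc).eventually_le_const hs

theorem InheritsTailClasses.of_uniformTailEquivalent [IsProbabilityMeasure μ]
    [IsProbabilityMeasure F] [IsMarkovKernel κ] (hF0 : ∀ᵐ y ∂F, 0 ≤ y)
    (hH0 : ∀ᵐ y ∂productLaw μ κ, 0 ≤ y) (hμ : ∀ᵐ t ∂μ, 0 ≤ t) (hμ0 : μ (Ioi 0) ≠ 0)
    (hS : ∀ᵐ t ∂μ, t ∈ S) (hh : Measurable h) (hκ : UniformTailEquivalent κ F h S)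
    (hB : ∀ c, 0 < c →
      Tendsto (fun x => mTail μ (c * x) / mTail (productLaw μ κ) x) atTop (𝓝 0)) :
    InheritsTailClasses F (productLaw μ κ) := by
  have : IsProbabilityMeasure (productLaw μ κ) :=
    Measure.isProbabilityMeasure_map (by fun_prop)
  have hH := hκ.tail_productLaw_ne_zero hμ hμ0 hS
  have hneg : TailNegligible (μ.restrict (Ioi 0)) (productLaw μ κ) := fun c hc =>
    (tailNegligible_of_tendsto hH hB c hc).mono_left
      (.of_forall fun _ => Measure.restrict_apply_le _ _)
  have hpos : ∀ᵐ t ∂μ.restrict (Ioi 0), 0 < t := ae_restrict_mem measurableSet_Ioi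
  have hSpos : ∀ᵐ t ∂μ.restrict (Ioi 0), t ∈ S := ae_restrict_of_ae hS
  have hequiv := hκ.tailEquivalent_transferMeasure_mconv hpos hSpos hh hneg
    ((eventually_ge_atTop 0).mono fun _ => tail_productLaw hμ)
  obtain ⟨C, hC⟩ := hκ.exists_forall_ofReal_le
  have hCae : ∀ᵐ t ∂μ.restrict (Ioi 0), ENNReal.ofReal (h t) ≤ C := hSpos.mono hC
  have : IsFiniteMeasure (transferMeasure (μ.restrict (Ioi 0)) h) :=
    isFiniteMeasure_of_le _ (transferMeasure_le_smul hCae)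
  exact .of_tailEquivalent_mconv hF0 hH0 (hκ.tail_ne_zero hS.exists) hH
    (transferMeasure_absolutelyContinuous.ae_le hpos) (hneg.transferMeasure hCae hequiv.le) hequiv

end ConditionalMixture

section ExceedanceLevel

variable {A : Set (Fin d → ℝ)}

lemma suprA_nonneg (A : Set (Fin d → ℝ)) (z : Fin d → ℝ) : 0 ≤ suprA A z :=
  Real.sSup_nonneg fun _ hu => hu.1.le

lemma bddAbove_setOf_mem_smul (hA0 : 0 ∉ closure A) (z : Fin d → ℝ) :
    BddAbove {u : ℝ | 0 < u ∧ z ∈ u • A} := by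
  obtain ⟨r, hr, hrA⟩ : ∃ r > 0, ∀ a ∈ A, r ≤ ‖a‖ := by
    simpa [Metric.mem_closure_iff] using hA0
  refine ⟨‖z‖ / r, ?_⟩
  rintro u ⟨hu, a, ha, rfl⟩
  have := mul_le_mul_of_nonneg_left (hrA a ha) hu.le
  simpa [le_div_iff₀ hr, norm_smul, abs_of_pos hu] using this

lemma lt_suprA_iff (hA0 : 0 ∉ closure A) (z : Fin d → ℝ) {x : ℝ} (hx : 0 ≤ x) :
    x < suprA A z ↔ ∃ u, x < u ∧ z ∈ u • A := by
  refine ⟨fun h => ?_, fun ⟨u, hxu, hu⟩ =>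
    hxu.trans_le (le_csSup (bddAbove_setOf_mem_smul hA0 z) ⟨hx.trans_lt hxu, hu⟩)⟩
  have hne : {u : ℝ | 0 < u ∧ z ∈ u • A}.Nonempty := by
    by_contra! hempty
    simp only [suprA, hempty, Real.sSup_empty] at h
    exact h.not_ge hx
  obtain ⟨u, hu, hxu⟩ := exists_lt_of_lt_csSup hne h
  exact ⟨u, hxu, hu.2⟩

lemma measurable_suprA (hA : IsOpen A) (hA0 : 0 ∉ closure A) : Measurable (suprA A) := by
  refine measurable_of_Ioi fun x => ?_
  rcases lt_or_ge x 0 with hx | hx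
  · convert MeasurableSet.univ
    exact eq_univ_of_forall fun z => hx.trans_le (suprA_nonneg A z)
  · have hpre : suprA A ⁻¹' Ioi x = ⋃ u ∈ Ioi x, u • A := by
      ext z
      simpa only [mem_preimage, mem_Ioi, mem_iUnion, exists_prop] using lt_suprA_iff hA0 z hx
    rw [hpre]
    exact (isOpen_biUnion fun u hu => hA.smul₀ (hx.trans_lt hu).ne').measurableSet

lemma suprA_smul (hA0 : 0 ∉ closure A) {θ : ℝ} (hθ : 0 ≤ θ) (z : Fin d → ℝ) :
    suprA A (θ • z) = θ * suprA A z := by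
  rcases hθ.eq_or_lt with rfl | hθ
  · have hempty : {u : ℝ | 0 < u ∧ (0 : ℝ) • z ∈ u • A} = ∅ := by
      refine eq_empty_of_forall_notMem fun u ⟨hu, hz⟩ => hA0 (subset_closure ?_)
      rwa [zero_smul, zero_mem_smul_set_iff hu.ne'] at hz
    rw [suprA, hempty, Real.sSup_empty, zero_mul]
  · have hset : {u : ℝ | 0 < u ∧ θ • z ∈ u • A} = θ • {u : ℝ | 0 < u ∧ z ∈ u • A} := by
      ext u
      simp only [mem_smul_set_iff_inv_smul_mem₀ hθ.ne', mem_ofPred_eq, smul_eq_mul, mul_smul,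
        mul_pos_iff_of_pos_left (inv_pos.2 hθ), mem_inv_smul_set_iff₀ hθ.ne']
    rw [suprA, hset, Real.sSup_smul_of_nonneg hθ.le, smul_eq_mul, suprA]

end ExceedanceLevel

lemma measSupport_eq_support (ν : Measure ℝ) : measSupport ν = ν.support := by
  ext t
  simp [measSupport, Measure.mem_support_iff_forall]

lemma productLaw_condDistrib {P : Measure Ω} [IsFiniteMeasure P] {Θ Y : Ω → ℝ}
    (hΘ : Measurable Θ) (hY : Measurable Y) :
    productLaw (P.map Θ) (condDistrib Y Θ P) = P.map fun ω => Θ ω * Y ω := by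
  rw [productLaw, compProd_map_condDistrib hY.aemeasurable,
    Measure.map_map measurable_mul (hΘ.prodMk hY)]
  rfl

lemma ae_map_nonneg {P : Measure Ω} {Y : Ω → ℝ} (hY : Measurable Y) (hY0 : ∀ ω, 0 ≤ Y ω) :
    ∀ᵐ y ∂P.map Y, 0 ≤ y :=
  (ae_map_iff hY.aemeasurable measurableSet_Ici).2 (.of_forall hY0)

theorem statement9_general (P : Measure Ω) [IsProbabilityMeasure P]
    (A : Set (Fin d → ℝ)) (hA : IsOpen A) (hA0 : 0 ∉ closure A)
    (X : Ω → Fin d → ℝ) (hX : Measurable X)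
    (Θ : Ω → ℝ) (hΘ : Measurable Θ) (hΘ0 : ∀ ω, 0 ≤ Θ ω)
    (hΘnd : 0 < P {ω | 0 < Θ ω})
    (h : ℝ → ℝ) (hh : Measurable h)
    (hCD : CDA P A X Θ h) (hB : BA P A X Θ) :
    InheritsTailClasses (FA P A X) (FA P A fun ω => Θ ω • X ω) := by
  have hY : Measurable fun ω => suprA A (X ω) := (measurable_suprA hA hA0).comp hX
  have hΘY : Measurable fun ω => Θ ω * suprA A (X ω) := hΘ.mul hY
  have hG : FA P A (fun ω => Θ ω • X ω) = P.map fun ω => Θ ω * suprA A (X ω) := by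
    simp only [FA, suprA_smul hA0 (hΘ0 _)]
  have hlaw := productLaw_condDistrib (P := P) hΘ hY
  have : IsProbabilityMeasure (P.map Θ) := Measure.isProbabilityMeasure_map hΘ.aemeasurable
  have : IsProbabilityMeasure (FA P A X) := Measure.isProbabilityMeasure_map hY.aemeasurable
  have hκ : UniformTailEquivalent (condDistrib (fun ω => suprA A (X ω)) Θ P) (FA P A X) h
      (P.map Θ).support := by
    simp only [UniformTailEquivalent, mTail, FA, Measure.map_apply hY measurableSet_Ioi,
      ← measSupport_eq_support]
    exact hCD
  rw [hG, ← hlaw]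
  refine .of_uniformTailEquivalent (ae_map_nonneg hY fun ω => suprA_nonneg A (X ω)) ?_
    (ae_map_nonneg hΘ hΘ0) ?_ Measure.support_mem_ae hh hκ ?_
  · rw [hlaw]
    exact ae_map_nonneg hΘY fun ω => mul_nonneg (hΘ0 ω) (suprA_nonneg A (X ω))
  · rw [Measure.map_apply hΘ measurableSet_Ioi]
    exact hΘnd.ne'
  · simp only [hlaw, mTail, Measure.map_apply hΘ measurableSet_Ioi,
      Measure.map_apply hΘY measurableSet_Ioi]
    exact hB

/-- Closure of the classes `𝓒_A, 𝓓_A, (𝓓∩𝓛)_A, 𝓢_A, 𝓛_A, 𝓟𝓓_A,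
(𝓓∩𝓟𝓓)_A, 𝓐_A, 𝓣_A, (𝓓∩𝓐)_A` under dependent scale mixtures `Θ X`, under
Assumptions `CD_A` and `B_A`. -/
theorem statement9 (P : Measure Ω) [IsProbabilityMeasure P]
    (A : Set (Fin d → ℝ)) (hA : IsRSet d A)
    (X : Ω → Fin d → ℝ) (hX : Measurable X)
    (Θ : Ω → ℝ) (hΘ : Measurable Θ) (hΘ0 : ∀ ω, 0 ≤ Θ ω)
    (hΘnd : 0 < P {ω | 0 < Θ ω})
    (h : ℝ → ℝ) (hh : Measurable h) (hhpos : ∀ t, 0 < h t)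
    (hCD : CDA P A X Θ h) (hB : BA P A X Θ) :
    (MemC (FA P A X) → MemC (FA P A fun ω => Θ ω • X ω)) ∧
    (MemD (FA P A X) → MemD (FA P A fun ω => Θ ω • X ω)) ∧
    (MemD (FA P A X) ∧ MemL (FA P A X) →
      MemD (FA P A fun ω => Θ ω • X ω) ∧ MemL (FA P A fun ω => Θ ω • X ω)) ∧
    (MemS (FA P A X) → MemS (FA P A fun ω => Θ ω • X ω)) ∧
    (MemL (FA P A X) → MemL (FA P A fun ω => Θ ω • X ω)) ∧
    (MemPD (FA P A X) → MemPD (FA P A fun ω => Θ ω • X ω)) ∧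
    (MemD (FA P A X) ∧ MemPD (FA P A X) →
      MemD (FA P A fun ω => Θ ω • X ω) ∧ MemPD (FA P A fun ω => Θ ω • X ω)) ∧
    (MemA (FA P A X) → MemA (FA P A fun ω => Θ ω • X ω)) ∧
    (MemT (FA P A X) → MemT (FA P A fun ω => Θ ω • X ω)) ∧
    (MemD (FA P A X) ∧ MemA (FA P A X) →
      MemD (FA P A fun ω => Θ ω • X ω) ∧ MemA (FA P A fun ω => Θ ω • X ω)) := by
  obtain ⟨hC, hD, hS, hL, hPD⟩ := statement9_general P A hA.isOpen hA.zero_notMem_closure X hX Θ hΘ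
    hΘ0 hΘnd h hh hCD hB
  exact ⟨hC, hD, .imp hD hL, hS, hL, hPD, .imp hD hPD, .imp hS hPD, .imp hL hPD,
    .imp hD (.imp hS hPD)⟩

end Paper
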